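/- arXiv:1202.1786 — 2 statements merged into one kernel-verified Lean document; each statement's English description precedes it below -/
import Mathlib

section
/- Let K be a field with char K ≠ ℓ containing a primitive ℓ-th root of unity, and T a subgroup of K^× with K^{×ℓ} ⊆ T and −1 ∈ T such that T ≠ 𝐇(T); set H = 𝐇(T). Fix a separable closure of K and let L be the subfield generated over K by all α with α^ℓ ∈ T. Assume there exists a subgroup T' ≤ L^× with L^{×ℓ} ⊆ T', T = K^× ∩ T', and H = K^× ∩ 𝐇(T') (where 𝐇(T') is computed in the field L). Then H is valuative and, denoting by v = v_H the coarsest valuation of K with O_v^× ⊆ H, one has 1+m_v ⊆ T, T·O_v^× = H, and the residue field k(v) has characteristic different from ℓ. -/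
/-- A subgroup `T ≤ F^×` is rigid if for every `x ∈ F^× \ T` the
subgroup of `F^×/T` generated by the images of `x` and `1 - x` is cyclic. -/
def IsRigid {F : Type*} [Field F] (T : Subgroup Fˣ) : Prop :=
  ∀ x : Fˣ, x ∉ T → ∀ h : (1 : F) - (x : F) ≠ 0,
    IsCyclic ↥(Subgroup.closure {(QuotientGroup.mk x : Fˣ ⧸ T),
      QuotientGroup.mk (Units.mk0 ((1 : F) - (x : F)) h)})

/-- The subgroup `𝐇(T)`: the intersection of all subgroups `H ≤ F^×` such that (i) `T ≤ H`
and `F^×/H` is cyclic, and (ii) for every `H'` with `T ≤ H'` and `F^×/H'` cyclic, `H ⊓ H'`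
is rigid. -/
def Hbold {F : Type*} [Field F] (T : Subgroup Fˣ) : Subgroup Fˣ :=
  sInf {H : Subgroup Fˣ |
    (T ≤ H ∧ IsCyclic (Fˣ ⧸ H)) ∧
    ∀ H' : Subgroup Fˣ, T ≤ H' → IsCyclic (Fˣ ⧸ H') → IsRigid (H ⊓ H')}

/-- The subfield `L = K(√[ℓ]{T})` of a separable closure `Ω` of `K`, generated over `K` by
all `α` with `α^ℓ ∈ T`. -/
noncomputable def Lfield {K : Type*} [Field K] (Ω : Type*) [Field Ω] [Algebra K Ω]
    (ℓ : ℕ) (T : Subgroup Kˣ) : IntermediateField K Ω :=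
  IntermediateField.adjoin K {α : Ω | ∃ t ∈ T, algebraMap K Ω ((t : Kˣ) : K) = α ^ ℓ}

/-- The canonical map `K^× → L^×`. -/
noncomputable def unitsToL {K : Type*} [Field K] (Ω : Type*) [Field Ω] [Algebra K Ω]
    (ℓ : ℕ) (T : Subgroup Kˣ) : Kˣ →* (↥(Lfield Ω ℓ T))ˣ :=
  Units.map (algebraMap K ↥(Lfield Ω ℓ T)).toMonoidHom

namespace Stmt9

structure Ctx {K : Type*} [Field K] (T H : K → Prop) : Prop where
  T1 : T 1
  T0 : ¬ T 0
  Tn : T (-1)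
  Tm : ∀ a b, T a → T b → T (a * b)
  Ti : ∀ a, T a → T a⁻¹
  H0 : ¬ H 0
  Hm : ∀ a b, H a → H b → H (a * b)
  Hi : ∀ a, H a → H a⁻¹
  TH : ∀ a, T a → H a
  R : ∀ x, x ≠ 0 → ¬ H x → T (1 + x) ∨ T ((1 + x) / x)
  A : ∀ h, H h → ¬ T h → H (1 + h)
  W : ∃ w, H w ∧ ¬ T w ∧ H (1 + w) ∧ ¬ T (1 + w) ∧ ¬ T ((1 + w) / w)

variable {K : Type*} [Field K] {T H : K → Prop}

/-- membership relation modulo a subgroup -/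
def E (T : K → Prop) (a b : K) : Prop := T (a / b)

namespace Ctx

lemma ne (c : Ctx T H) {a : K} (h : T a) : a ≠ 0 := fun e => c.T0 (e ▸ h)
lemma neH (c : Ctx T H) {a : K} (h : H a) : a ≠ 0 := fun e => c.H0 (e ▸ h)
lemma H1 (c : Ctx T H) : H 1 := c.TH _ c.T1
lemma Hd (c : Ctx T H) {a b : K} (h : H a) (h' : H b) : H (a / b) := by
  rw [div_eq_mul_inv]; exact c.Hm _ _ h (c.Hi _ h')
lemma Td (c : Ctx T H) {a b : K} (h : T a) (h' : T b) : T (a / b) := by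
  rw [div_eq_mul_inv]; exact c.Tm _ _ h (c.Ti _ h')

lemma Ene (c : Ctx T H) {a b : K} (h : E T a b) : a ≠ 0 ∧ b ≠ 0 := by
  have := c.ne h; exact div_ne_zero_iff.1 this
lemma Fne (c : Ctx T H) {a b : K} (h : E H a b) : a ≠ 0 ∧ b ≠ 0 := by
  have := c.neH h; exact div_ne_zero_iff.1 this
lemma EF (c : Ctx T H) {a b : K} (h : E T a b) : E H a b := c.TH _ h
lemma Es (c : Ctx T H) {a b : K} (h : E T a b) : E T b a := by
  have := c.Ti _ h; rwa [inv_div] at this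
lemma Fs (c : Ctx T H) {a b : K} (h : E H a b) : E H b a := by
  have := c.Hi _ h; rwa [inv_div] at this
lemma Et (c : Ctx T H) {a b d : K} (h : E T a b) (h' : E T b d) : E T a d := by
  have := c.Tm _ _ h h'
  have hb := (c.Ene h).2
  have e : a / b * (b / d) = a / d := by field_simp
  unfold E; rwa [← e]
lemma Ft (c : Ctx T H) {a b d : K} (h : E H a b) (h' : E H b d) : E H a d := by
  have := c.Hm _ _ h h'
  have hb := (c.Fne h).2
  have e : a / b * (b / d) = a / d := by field_simp
  unfold E; rwa [← e]
lemma sc {S : K → Prop} {a b : K} (z : K) (hz : z ≠ 0) (h : E S a b) : E S (z * a) (z * b) := by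
  unfold E at *; rwa [mul_div_mul_left _ _ hz]

lemma sum (c : Ctx T H) {a b : K} (ha : a ≠ 0) (hb : b ≠ 0) (h : ¬ E H a b) :
    E T (a + b) a ∨ E T (a + b) b := by
  rcases c.R (a / b) (div_ne_zero ha hb) h with h | h
  · right; unfold E; convert h using 1; field_simp; ring
  · left; unfold E; convert h using 1; field_simp; ring

lemma excl (c : Ctx T H) {a b s : K} (h : ¬ E H a b) (h1 : E T s a) (h2 : E T s b) : False :=
  h (c.EF (c.Et (c.Es h1) h2))

/-- two elements of `H`, different modulo `T`: sum in `H` -/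
lemma sumH (c : Ctx T H) {a b : K} (hab : E H a b) (h : ¬ E T a b) : E H (a + b) b := by
  have := c.A _ hab h
  have hb := (c.Fne hab).2
  unfold E; convert this using 1; field_simp; ring

lemma trans (c : Ctx T H) {a b d : K} (ha : a ≠ 0) (hb : b ≠ 0) (hd : d ≠ 0)
    (hab : ¬ E H a b) (hbd : ¬ E H b d) (had : ¬ E H a d)
    (h1 : E T (a + b) b) (h2 : E T (b + d) d) : E T (a + d) d := by
  rcases c.sum ha hd had with h | h
  swap; · exact h
  exfalso
  have n1 : ¬ E H (a + b) d := fun k => hbd (c.Ft (c.Fs (c.EF h1)) k)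
  have n2 : ¬ E H a (b + d) := fun k => had (c.Ft k (c.EF h2))
  have n3 : ¬ E H (a + d) b := fun k => hab (c.Ft (c.Fs (c.EF h)) k)
  have s1 : E T (a + b + d) b ∨ E T (a + b + d) d := by
    rcases c.sum (c.Ene h1).1 hd n1 with k | k
    · exact .inl (c.Et k h1)
    · exact .inr k
  have s2 : E T (a + b + d) a ∨ E T (a + b + d) d := by
    rw [add_assoc]
    rcases c.sum ha (c.Ene h2).1 n2 with k | k
    · exact .inl k
    · exact .inr (c.Et k h2)
  have s3 : E T (a + b + d) a ∨ E T (a + b + d) b := by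
    rw [add_right_comm]
    rcases c.sum (c.Ene h).1 hb n3 with k | k
    · exact .inl (c.Et k h)
    · exact .inr k
  have e1 := fun k k' => c.excl (s := a + b + d) hab k k'
  have e2 := fun k k' => c.excl (s := a + b + d) had k k'
  have e3 := fun k k' => c.excl (s := a + b + d) hbd k k'
  tauto

/-- nonzero elements of `H` which are in the ring -/
def OP (T H : K → Prop) (h : K) : Prop :=
  H h ∧ ∀ x, x ≠ 0 → ¬ H x → E T (1 + x) x → E T (h + x) x

def OM (T H : K → Prop) (a : K) : Prop := a ≠ 0 ∧ ¬ H a ∧ T (1 + a)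

lemma Fone {x : K} : E H x 1 ↔ H x := by unfold E; rw [div_one]
lemma Eone {x : K} : E T x 1 ↔ T x := by unfold E; rw [div_one]

lemma crit (c : Ctx T H) {h : K} (hH : H h) (hT : ¬ T h) (hh : ¬ E T (1 + h) h) : OP T H h := by
  refine ⟨hH, fun x hx hxH h1 => ?_⟩
  have h0 := c.neH hH
  have nhx : ¬ E H h x := fun k => hxH (Fone.1 (c.Ft (c.Fs k) (Fone.2 hH)))
  rcases c.sum h0 hx nhx with k | k
  swap; · exact k
  exfalso
  have hA := c.A _ hH hT
  have n1 : ¬ E H (1 + h) x := fun k => hxH (Fone.1 (c.Ft (c.Fs k) (Fone.2 hA)))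
  have n2 : ¬ E H (1 + x) h := fun k => nhx (c.Ft (c.Fs k) (c.EF h1))
  have s1 : E T (1 + h + x) (1 + h) ∨ E T (1 + h + x) x := c.sum (c.neH hA) hx n1
  have s2 : E T (1 + h + x) x ∨ E T (1 + h + x) h := by
    rw [add_right_comm]
    rcases c.sum (c.Ene h1).1 h0 n2 with k | k
    · exact .inl (c.Et k h1)
    · exact .inr k
  have s3 : H (1 + h + x) := by
    rw [add_assoc]
    apply c.A
    · exact Fone.1 (c.Ft (c.EF k) (Fone.2 hH))
    · exact fun k' => hT (Eone.1 (c.Et (c.Es k) (Eone.2 k')))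
  have s4 : ¬ E T (1 + h + x) x := fun k => hxH (Fone.1 (c.Ft (c.Fs (c.EF k)) (Fone.2 s3)))
  have s5 : E T (1 + h + x) (1 + h) := by tauto
  have s6 : E T (1 + h + x) h := by tauto
  exact hh (c.Et (c.Es s5) s6)

lemma OP_mul (c : Ctx T H) {a b : K} (ha : OP T H a) (hb : OP T H b) : OP T H (a * b) := by
  refine ⟨c.Hm _ _ ha.1 hb.1, fun x hx hxH h1 => ?_⟩
  have a0 := c.neH ha.1
  have h2 := ha.2 x hx hxH h1
  have h3 : E T (1 + x / a) (x / a) := by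
    have := sc a⁻¹ (inv_ne_zero a0) h2
    convert this using 1 <;> field_simp
  have h4 := hb.2 (x / a) (div_ne_zero hx a0)
    (fun k => hxH (by have := c.Hm _ _ k ha.1; rwa [div_mul_cancel₀ _ a0] at this)) h3
  have := sc a a0 h4
  convert this using 1 <;> field_simp

lemma OP_mul_OM (c : Ctx T H) {a b : K} (ha : OP T H a) (hb : OM T H b) : OM T H (a * b) := by
  obtain ⟨b0, bH, bT⟩ := hb
  have a0 := c.neH ha.1
  refine ⟨mul_ne_zero a0 b0, fun k => bH ?_, ?_⟩
  · have := c.Hm _ _ (c.Hi _ ha.1) k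
    rwa [inv_mul_cancel_left₀ a0] at this
  · have h2 := ha.2 b⁻¹ (inv_ne_zero b0) (fun k => bH (by have := c.Hi _ k; rwa [inv_inv] at this))
      (by unfold E; convert bT using 1; field_simp; ring)
    unfold E at h2
    convert h2 using 1; field_simp; ring

lemma OM_or (c : Ctx T H) {a : K} (a0 : a ≠ 0) (aH : ¬ H a) : OM T H a ∨ OM T H a⁻¹ := by
  rcases c.R a a0 aH with h | h
  · exact .inl ⟨a0, aH, h⟩
  · refine .inr ⟨inv_ne_zero a0, fun k => aH (by have := c.Hi _ k; rwa [inv_inv] at this), ?_⟩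
    convert h using 1; field_simp; ring

lemma OM_not (c : Ctx T H) {a : K} (h : OM T H a) (h' : OM T H a⁻¹) : False := by
  obtain ⟨a0, aH, aT⟩ := h
  refine aH (c.TH _ ?_)
  have := c.Td aT h'.2.2
  have n := c.ne h'.2.2
  convert this using 1
  have : a * (1 + a⁻¹) = 1 + a := by field_simp; ring
  rw [← this, mul_div_cancel_right₀ _ n]

lemma OP_or' (c : Ctx T H) {a : K} (ha : H a) (hT : ¬ T a) : OP T H a ∨ OP T H a⁻¹ := by
  have a0 := c.neH ha
  by_cases h : E T (1 + a) a
  · right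
    refine c.crit (c.Hi _ ha) (fun k => hT (by have := c.Ti _ k; rwa [inv_inv] at this)) fun k => ?_
    have k' : E T (1 + a) 1 := by unfold E at *; convert k using 1; field_simp; ring
    exact hT (Eone.1 (c.Et (c.Es h) k'))
  · exact .inl (c.crit ha hT h)

/-- good unit -/
lemma W' (c : Ctx T H) : ∃ w, w ≠ 0 ∧ ¬ T w ∧ ¬ T (1 + w) ∧ ¬ E T (1 + w) w ∧ 1 + w ≠ 0 ∧
    OP T H w ∧ OP T H w⁻¹ ∧ OP T H (1 + w) ∧ OP T H (1 + w)⁻¹ := by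
  obtain ⟨w, wH, wT, vH, vT, hvw⟩ := c.W
  have w0 := c.neH wH
  have v0 := c.neH vH
  have inv {a : K} (h : ¬ T a) : ¬ T a⁻¹ := fun k => h (by have := c.Ti _ k; rwa [inv_inv] at this)
  have p1 : OP T H w := c.crit wH wT hvw
  have p2 : OP T H w⁻¹ := c.crit (c.Hi _ wH) (inv wT) (fun k => vT (by
    unfold E at k; convert k using 1; field_simp; ring))
  -- `-w / (1+w)` and its inverse
  have negT {a : K} (h : ¬ T a) : ¬ T (-a) := fun k => h (by
    have := c.Tm _ _ c.Tn k; simpa using this)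
  have negH {a : K} (h : H a) : H (-a) := by
    have := c.Hm _ _ (c.TH _ c.Tn) h; simpa using this
  have q1 : OP T H (-(1 + w)) := by
    refine c.crit (negH vH) (negT vT) fun k => ?_
    unfold E at k
    refine inv hvw (?_)
    convert k using 1; field_simp; ring
  have q2 : OP T H (-(1 + w))⁻¹ := by
    refine c.crit (c.Hi _ (negH vH)) (inv (negT vT)) fun k => ?_
    unfold E at k
    refine negT wT ?_
    have v0' : -(1 + w) ≠ 0 := neg_ne_zero.2 v0
    convert k using 1; field_simp; ring
  have n1 : OP T H (-1) := by
    have a1 : OP T H (-w) ∨ OP T H (-w)⁻¹ := c.OP_or' (negH wH) (negT wT)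
    rcases a1 with a1 | a1
    · have := c.OP_mul a1 p2
      convert this using 1; field_simp
    · have := c.OP_mul a1 p1
      convert this using 1; field_simp
  refine ⟨w, w0, wT, vT, hvw, v0, p1, p2, ?_, ?_⟩
  · have := c.OP_mul n1 q1
    convert this using 1; ring
  · have := c.OP_mul n1 q2
    convert this using 1
    rw [inv_neg]; ring

lemma OP_or (c : Ctx T H) {a : K} (ha : H a) : OP T H a ∨ OP T H a⁻¹ := by
  by_cases hT : T a
  · obtain ⟨w, w0, wT, -, -, -, p1, p2, -, -⟩ := c.W'
    have a0 := c.neH ha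
    rcases c.OP_or' (c.Hm _ _ ha p1.1) (fun k => wT (by
      have := c.Tm _ _ (c.Ti _ hT) k
      rwa [inv_mul_cancel_left₀ a0] at this)) with h | h
    · left
      have := c.OP_mul h p2
      rwa [mul_inv_cancel_right₀ w0] at this
    · right
      have := c.OP_mul h p1
      convert this using 1; field_simp
  · exact c.OP_or' ha hT

lemma OP_one (c : Ctx T H) : OP T H 1 := ⟨c.H1, fun _ _ _ h => h⟩
lemma OP_neg_one (c : Ctx T H) : OP T H (-1) := by
  rcases c.OP_or (c.TH _ c.Tn) with h | h
  · exact h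
  · convert h using 1; norm_num

def mem (T H : K → Prop) (a : K) : Prop := a = 0 ∨ OM T H a ∨ OP T H a

lemma OM_mul_OM (c : Ctx T H) {a b : K} (ha : OM T H a) (hb : OM T H b) :
    OM T H (a * b) ∨ OP T H (a * b) := by
  have a0 := ha.1
  have b0 := hb.1
  by_cases h : H (a * b)
  · right
    rcases c.OP_or h with k | k
    · exact k
    · exfalso
      have := c.OP_mul_OM k hb
      refine c.OM_not ha ?_
      convert this using 1; field_simp
  · left
    refine ⟨mul_ne_zero a0 b0, h, ?_⟩
    have t1 : E T (a * b + a) a := by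
      unfold E; convert hb.2.2 using 1; field_simp; ring
    have t2 : E T (a + 1) 1 := Eone.2 (by rw [add_comm]; exact ha.2.2)
    have := c.trans (mul_ne_zero a0 b0) a0 one_ne_zero
      (by unfold E; rw [mul_div_cancel_left₀ _ a0]; exact hb.2.1)
      (fun k => ha.2.1 (Fone.1 k)) (fun k => h (Fone.1 k)) t1 t2
    rw [add_comm]; exact Eone.1 this

lemma mem_mul (c : Ctx T H) {a b : K} (ha : mem T H a) (hb : mem T H b) : mem T H (a * b) := by
  rcases ha with rfl | ha | ha
  · left; simp
  · rcases hb with rfl | hb | hb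
    · left; simp
    · exact .inr (c.OM_mul_OM ha hb)
    · right; left; rw [mul_comm]; exact c.OP_mul_OM hb ha
  · rcases hb with rfl | hb | hb
    · left; simp
    · exact .inr (.inl (c.OP_mul_OM ha hb))
    · exact .inr (.inr (c.OP_mul ha hb))

lemma mem_or (c : Ctx T H) (a : K) : mem T H a ∨ mem T H a⁻¹ := by
  by_cases a0 : a = 0
  · exact .inl (.inl a0)
  by_cases h : H a
  · rcases c.OP_or h with k | k
    · exact .inl (.inr (.inr k))
    · exact .inr (.inr (.inr k))
  · rcases c.OM_or a0 h with k | k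
    · exact .inl (.inr (.inl k))
    · exact .inr (.inr (.inl k))

lemma mem_neg (c : Ctx T H) {a : K} (ha : mem T H a) : mem T H (-a) := by
  rw [← neg_one_mul]; exact c.mem_mul (.inr (.inr c.OP_neg_one)) ha

lemma one_add_OM (c : Ctx T H) {a : K} (ha : OM T H a) : OP T H (1 + a) := by
  obtain ⟨w, w0, wT, vT, hvw, v0, p1, p2, p3, p4⟩ := c.W'
  have a0 := ha.1
  have t0 := c.ne ha.2.2
  have h1 : OP T H (w * (1 + a)) := by
    refine c.crit (c.Hm _ _ p1.1 (c.TH _ ha.2.2)) (fun k => wT ?_) fun k => hvw ?_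
    · have := c.Td k ha.2.2
      rwa [mul_div_cancel_right₀ _ t0] at this
    · have m := (c.OP_mul_OM p4 (c.OP_mul_OM p1 ha)).2.2
      have k1 : E T (1 + w * (1 + a)) (1 + w) := by
        unfold E; convert m using 1; field_simp; ring
      have k2 : E T (w * (1 + a)) w := by
        unfold E; rw [mul_div_cancel_left₀ _ w0]; exact ha.2.2
      exact c.Et (c.Es k1) (c.Et k k2)
  have := c.OP_mul h1 p2
  convert this using 1; field_simp

lemma one_add_OP (c : Ctx T H) {a : K} (ha : OP T H a) (hn : ¬ (T a ∧ T (1 + a))) :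
    mem T H (1 + a) := by
  by_cases z : 1 + a = 0
  · exact .inl z
  have a0 := c.neH ha.1
  by_cases h : H (1 + a)
  · right; right
    refine ⟨h, fun x x0 xH h1 => ?_⟩
    have ha' := ha.2 x x0 xH h1
    have n1 : ¬ E H (1 + a) x := fun k => xH (Fone.1 (c.Ft (c.Fs k) (Fone.2 h)))
    have n2 : ¬ E H (1 + x) a := fun k =>
      xH (Fone.1 (c.Ft (c.Fs (c.EF h1)) (c.Ft k (Fone.2 ha.1))))
    have n3 : ¬ E H 1 (a + x) := fun k => xH (Fone.1 (c.Ft (c.Fs (c.EF ha')) (c.Fs k)))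
    rcases c.sum z x0 n1 with k | k
    swap; · exact k
    exfalso
    have nx : ¬ E T (1 + a + x) x := fun k' => n1 (c.EF (c.Et (c.Es k) k'))
    have s1 : E T (1 + a + x) a := by
      rw [add_right_comm] at nx ⊢
      rcases c.sum (c.Ene h1).1 a0 n2 with k | k
      · exact absurd (c.Et k h1) nx
      · exact k
    have s2 : E T (1 + a + x) 1 := by
      rw [add_assoc] at nx ⊢
      rcases c.sum one_ne_zero (c.Ene ha').1 n3 with k | k
      · exact k
      · exact absurd (c.Et k ha') nx
    exact hn ⟨Eone.1 (c.Et (c.Es s1) s2), Eone.1 (c.Et (c.Es k) s2)⟩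
  · rcases c.OM_or z h with k | k
    · exact .inr (.inl k)
    · exfalso
      have b : OP T H (-a) := by rw [← neg_one_mul]; exact c.OP_mul c.OP_neg_one ha
      have e := b.2 (1 + a) z h (by
        unfold E; convert k.2.2 using 1; field_simp; ring)
      rw [neg_add_cancel_comm_assoc] at e
      exact h (Fone.1 (c.Fs (c.EF e)))

lemma add_aux (c : Ctx T H) {a b : K} (hb : mem T H b)
    (b0 : b ≠ 0) (h : mem T H (a / b)) (hn : ¬ (E T a b ∧ E T (a + b) b)) : mem T H (a + b) := by
  have e : a + b = b * (1 + a / b) := by field_simp; ring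
  have : mem T H (1 + a / b) := by
    rcases h with h | h | h
    · rw [h, add_zero]; exact .inr (.inr c.OP_one)
    · exact .inr (.inr (c.one_add_OM h))
    · refine c.one_add_OP h fun k => hn ⟨k.1, ?_⟩
      unfold E; convert k.2 using 1; field_simp; ring
  rw [e]; exact c.mem_mul hb this

lemma add_aux' (c : Ctx T H) {a b : K} (ha : mem T H a) (hb : mem T H b)
    (hn : ¬ (E T a b ∧ E T (a + b) b)) : mem T H (a + b) := by
  by_cases a0 : a = 0
  · simpa [a0] using hb
  by_cases b0 : b = 0
  · simpa [b0] using ha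
  rcases c.mem_or (a / b) with h | h
  · exact c.add_aux hb b0 h hn
  · rw [inv_div] at h
    rw [add_comm]
    refine c.add_aux ha a0 h fun k => hn ⟨c.Es k.1, ?_⟩
    rw [add_comm]; exact c.Et k.2 (c.Es k.1)

lemma mem_add (c : Ctx T H) {a b : K} (ha : mem T H a) (hb : mem T H b) : mem T H (a + b) := by
  by_cases hn : E T a b ∧ E T (a + b) b
  swap; · exact c.add_aux' ha hb hn
  obtain ⟨w, w0, wT, vT, hvw, v0, p1, p2, p3, p4⟩ := c.W'
  obtain ⟨h1, h2⟩ := hn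
  have b0 := (c.Ene h1).2
  -- a + b = (1+w) b + (a - w b)
  have m1 : mem T H (-(w * b)) := c.mem_neg (c.mem_mul (.inr (.inr p1)) hb)
  have m2 : mem T H (a + -(w * b)) := by
    refine c.add_aux' ha m1 fun k => wT ?_
    have k1 := c.Et (c.Es h1) k.1
    have k2 := c.Tm _ _ c.Tn (c.Ti _ k1)
    convert k2 using 1; field_simp
  have m3 : mem T H ((a + -(w * b)) + (1 + w) * b) := by
    refine c.add_aux' m2 (c.mem_mul (.inr (.inr p3)) hb) fun k => vT ?_
    have k1 := k.2
    have e : (a + -(w * b)) + (1 + w) * b = a + b := by ring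
    rw [e] at k1
    have := c.Es (c.Et (c.Es h2) k1)
    unfold E at this
    rwa [mul_div_cancel_right₀ _ b0] at this
  convert m3 using 1; ring

lemma max_aux (c : Ctx T H) {a : K} (ha : OP T H a) (ha' : ¬ OP T H a⁻¹) (hT : ¬ T a) :
    T (1 + a) := by
  by_contra h
  have a0 := c.neH ha.1
  refine ha' (c.crit (c.Hi _ ha.1) (fun k => hT (by have := c.Ti _ k; rwa [inv_inv] at this))
    fun k => h ?_)
  unfold E at k; convert k using 1; field_simp; ring

theorem main (c : Ctx T H) : ∃ O : ValuationSubring K,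
    (∀ u, u ≠ 0 → u ∈ O → u⁻¹ ∈ O → H u) ∧
    (∀ O' : ValuationSubring K, (∀ u, u ≠ 0 → u ∈ O' → u⁻¹ ∈ O' → H u) → O' ≤ O) ∧
    (∀ a, (a = 0 ∨ a⁻¹ ∉ O) → T (1 + a)) := by
  let O : ValuationSubring K :=
    { carrier := {a | mem T H a}
      mul_mem' := fun ha hb => c.mem_mul ha hb
      one_mem' := .inr (.inr c.OP_one)
      add_mem' := fun ha hb => c.mem_add ha hb
      zero_mem' := .inl rfl
      neg_mem' := fun ha => c.mem_neg ha
      mem_or_inv_mem' := fun a => c.mem_or a }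
  have hO : ∀ a, a ∈ O ↔ mem T H a := fun a => Iff.rfl
  refine ⟨O, ?_, ?_, ?_⟩
  · intro u u0 h1 h2
    by_contra hu
    rw [hO] at h1 h2
    have iH : ¬ H u⁻¹ := fun k => hu (by have := c.Hi _ k; rwa [inv_inv] at this)
    rcases h1 with h1 | h1 | h1
    · exact u0 h1
    · rcases h2 with h2 | h2 | h2
      · exact inv_ne_zero u0 h2
      · exact c.OM_not h1 h2
      · exact iH h2.1
    · exact hu h1.1
  · intro O' h z hz
    -- `O^-` equals the non-`H` elements of `O'`
    have small : ∀ y, y ≠ 0 → ¬ H y → y ∈ O' → T (1 + y) := by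
      intro y y0 yH hy
      have hyi : y⁻¹ ∉ O' := fun k => yH (h y y0 hy k)
      have n0 : 1 + y ≠ 0 := fun k => yH (by
        have : y = -1 := by linear_combination k
        rw [this]; exact c.TH _ c.Tn)
      have h1 : (1 + y) ∈ O' := add_mem (one_mem _) hy
      have h2 : (1 + y)⁻¹ ∈ O' := by
        rcases O'.mem_or_inv_mem ((1 + y)⁻¹) with k | k
        · exact k
        · by_contra k'
          have k2 : y * (1 + y)⁻¹ ∉ O' := fun k3 => k' (by
            have := sub_mem (one_mem O') k3
            convert this using 1; field_simp; ring)
          rcases O'.mem_or_inv_mem (y * (1 + y)⁻¹) with k4 | k4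
          · exact k2 k4
          · refine hyi ?_
            have := sub_mem k4 (one_mem O')
            convert this using 1; field_simp; ring
      have h3 := h _ n0 h1 h2
      rcases c.R y y0 yH with k | k
      · exact k
      · exfalso
        refine yH ?_
        have := c.Hd h3 (c.TH _ k)
        convert this using 1; field_simp
    rw [hO]
    by_cases z0 : z = 0
    · exact .inl z0
    by_cases zH : H z
    · right; right
      refine ⟨zH, fun x x0 xH hx => ?_⟩
      have iH : ¬ H x⁻¹ := fun k => xH (by have := c.Hi _ k; rwa [inv_inv] at this)
      have xi : x⁻¹ ∈ O' := by
        rcases O'.mem_or_inv_mem x with k | k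
        · exfalso
          have := small x x0 xH k
          exact xH (c.TH _ (Eone.1 (c.Et (c.Es hx) (Eone.2 this))))
        · exact k
      have := small (z * x⁻¹) (mul_ne_zero z0 (inv_ne_zero x0)) (fun k => iH (by
        have := c.Hm _ _ (c.Hi _ zH) k
        rwa [inv_mul_cancel_left₀ z0] at this)) (mul_mem hz xi)
      unfold E; convert this using 1; field_simp; ring
    · exact .inr (.inl ⟨z0, zH, small z z0 zH hz⟩)
  · rintro a (rfl | h)
    · simpa using c.T1
    · have a0 : a ≠ 0 := by rintro rfl; exact h (by simp)
      have ha := (c.mem_or a).resolve_right h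
      have hn : ¬ OP T H a⁻¹ := fun k => h (.inr (.inr k))
      rcases ha with ha | ha | ha
      · exact absurd ha a0
      · exact ha.2.2
      · by_cases hT : T a
        swap; · exact c.max_aux ha hn hT
        obtain ⟨w, w0, wT, vT, hvw, v0, p1, p2, p3, p4⟩ := c.W'
        have n1 := c.OP_neg_one
        have b1 : OP T H (-(a * w)) := by
          have := c.OP_mul n1 (c.OP_mul ha p1); rwa [neg_one_mul] at this
        have b2 : T (1 + -(a * w)) := by
          refine c.max_aux b1 (fun k => hn ?_) (fun k => wT ?_)
          · have := c.OP_mul n1 (c.OP_mul k p1)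
            convert this using 1; field_simp; 
          · have := c.Tm _ _ c.Tn (c.Td k hT)
            convert this using 1; field_simp
        have t0 := c.ne b2
        have b3 : OP T H (1 + -(a * w)) := by
          have : mem T H (1 + -(a * w)) := c.mem_add (.inr (.inr c.OP_one)) (.inr (.inr b1))
          rcases this with k | k | k
          · exact absurd k t0
          · exact absurd (c.TH _ b2) k.2.1
          · exact k
        have b4 : OP T H (1 + -(a * w))⁻¹ := by
          rcases c.OP_or (c.Hi _ b3.1) with k | k
          · exact k
          · by_contra k'
            -- then `1 - aw` is a non unit; so is `1`
            have iw : a * w ≠ 0 := mul_ne_zero a0 w0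
            rcases c.mem_or (a * w / (1 + -(a * w))) with m | m
            · have := c.mem_add (.inr (.inr c.OP_one)) m
              have e : 1 + a * w / (1 + -(a * w)) = (1 + -(a * w))⁻¹ := by field_simp; ring
              rw [e] at this
              rcases this with k | k | k
              · exact inv_ne_zero t0 k
              · exact k.2.1 (c.Hi _ b3.1)
              · exact k' k
            · have := c.mem_add (.inr (.inr c.OP_one)) m
              have e : 1 + (a * w / (1 + -(a * w)))⁻¹ = (a * w)⁻¹ := by field_simp; ring
              rw [e] at this
              refine h ?_
              have := c.mem_mul (.inr (.inr p1)) this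
              rw [hO]
              convert this using 1; field_simp
        have b5 : OP T H (a * (1 + w) * (1 + -(a * w))⁻¹) := c.OP_mul (c.OP_mul ha p3) b4
        have b6 : T (1 + a * (1 + w) * (1 + -(a * w))⁻¹) := by
          refine c.max_aux b5 (fun k => hn ?_) (fun k => vT ?_)
          · have := c.OP_mul (c.OP_mul p3 b4) k
            convert this using 1; field_simp
          · have := c.Tm _ _ (c.Td k hT) b2
            clear_value O
            generalize 1 + -(a * w) = t at *
            convert this using 1; field_simp
        have := c.Tm _ _ b2 b6
        convert this using 1; field_simp; ring

end Ctx
end Stmt9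
namespace Stmt9

section grp
variable {G : Type*} [CommGroup G] {ℓ : ℕ}

lemma bez (hℓ : ℓ.Prime) (N : Subgroup G) (hp : ∀ y : G, y ^ ℓ ∈ N) {y : G} {n : ℤ}
    (h : y ^ n ∈ N) (hy : y ∉ N) : (ℓ : ℤ) ∣ n := by
  by_contra hd
  have hc : IsCoprime (ℓ : ℤ) n :=
    (Nat.prime_iff_prime_int.1 hℓ).irreducible.coprime_iff_not_dvd.2 hd
  obtain ⟨u, v, e⟩ := hc
  apply hy
  have : y = (y ^ ℓ) ^ u * (y ^ n) ^ v := by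
    rw [← zpow_natCast, ← zpow_mul, ← zpow_mul, ← zpow_add, mul_comm _ u, mul_comm n v, e, zpow_one]
  rw [this]
  exact mul_mem (zpow_mem (hp y) _) (zpow_mem h _)

lemma pow_dvd (N : Subgroup G) (hp : ∀ y : G, y ^ ℓ ∈ N) (y : G) {n : ℤ}
    (h : (ℓ : ℤ) ∣ n) : y ^ n ∈ N := by
  obtain ⟨m, rfl⟩ := h
  rw [zpow_mul, zpow_natCast]; exact zpow_mem (hp y) _

lemma gen_swap (hℓ : ℓ.Prime) (N : Subgroup G) (hp : ∀ y : G, y ^ ℓ ∈ N) {x g : G} {n : ℤ}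
    (h : x / g ^ n ∈ N) (hx : x ∉ N) (y : G) {m : ℤ} (hy : y / g ^ m ∈ N) :
    ∃ k : ℤ, y / x ^ k ∈ N := by
  have hd : ¬ (ℓ : ℤ) ∣ n := fun hd => hx (by
    have := mul_mem h (pow_dvd N hp g hd); rwa [div_mul_cancel] at this)
  have hc : IsCoprime (ℓ : ℤ) n :=
    (Nat.prime_iff_prime_int.1 hℓ).irreducible.coprime_iff_not_dvd.2 hd
  obtain ⟨u, v, e⟩ := hc
  refine ⟨v * m, ?_⟩
  have e1 : (x / g ^ n) ^ (v * m) ∈ N := zpow_mem h _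
  have e2 : (g ^ ℓ) ^ (u * m) ∈ N := zpow_mem (hp g) _
  have : y / x ^ (v * m) = (y / g ^ m) * (g ^ ℓ) ^ (u * m) / (x / g ^ n) ^ (v * m) := by
    have : g ^ m = (g ^ ℓ) ^ (u * m) * (g ^ n) ^ (v * m) := by
      rw [← zpow_natCast, ← zpow_mul, ← zpow_mul, ← zpow_add]
      congr 1; linear_combination (-m) * e
    rw [this, div_zpow]
    generalize (g ^ ℓ) ^ (u * m) = a
    generalize (g ^ n) ^ (v * m) = b
    generalize x ^ (v * m) = d
    simp only [div_eq_mul_inv, mul_inv, inv_inv]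
    have : y * (a⁻¹ * b⁻¹) * a * (d⁻¹ * b) = y * d⁻¹ * (a⁻¹ * a) * (b⁻¹ * b) := by ac_rfl
    rw [this]; simp
  rw [this]
  exact div_mem (mul_mem hy e2) e1

lemma mk_zpow (N : Subgroup G) (x g : G) (n : ℤ) :
    (x / g ^ n ∈ N) ↔ (QuotientGroup.mk g : G ⧸ N) ^ n = QuotientGroup.mk x := by
  rw [← QuotientGroup.mk_zpow, QuotientGroup.eq, div_eq_inv_mul]

lemma cyc_gen (hℓ : ℓ.Prime) (N : Subgroup G) (hp : ∀ y : G, y ^ ℓ ∈ N) (hN : IsCyclic (G ⧸ N))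
    {x : G} (hx : x ∉ N) (y : G) : ∃ k : ℤ, y / x ^ k ∈ N := by
  obtain ⟨g, hg⟩ := hN.exists_generator
  obtain ⟨g, rfl⟩ := QuotientGroup.mk_surjective g
  obtain ⟨n, hn⟩ := hg (QuotientGroup.mk x)
  obtain ⟨m, hm⟩ := hg (QuotientGroup.mk y)
  exact gen_swap hℓ N hp ((mk_zpow _ _ _ _).2 hn) hx y ((mk_zpow _ _ _ _).2 hm)

lemma cyc_closure_iff (hℓ : ℓ.Prime) (N : Subgroup G) (hp : ∀ y : G, y ^ ℓ ∈ N)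
    {x : G} (hx : x ∉ N) (y : G) :
    IsCyclic ↥(Subgroup.closure {(QuotientGroup.mk x : G ⧸ N), QuotientGroup.mk y}) ↔
      ∃ k : ℤ, y / x ^ k ∈ N := by
  constructor
  · intro h
    obtain ⟨⟨g, gm⟩, hg⟩ := h.exists_generator
    obtain ⟨g, rfl⟩ := QuotientGroup.mk_surjective g
    obtain ⟨n, hn⟩ := hg ⟨QuotientGroup.mk x, Subgroup.subset_closure (by simp)⟩
    obtain ⟨m, hm⟩ := hg ⟨QuotientGroup.mk y, Subgroup.subset_closure (by simp)⟩
    have hn := congrArg Subtype.val hn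
    have hm := congrArg Subtype.val hm
    simp only [Subgroup.coe_zpow] at hn hm
    exact gen_swap hℓ N hp ((mk_zpow _ _ _ _).2 hn) hx y ((mk_zpow _ _ _ _).2 hm)
  · rintro ⟨k, hk⟩
    have hle : Subgroup.closure {(QuotientGroup.mk x : G ⧸ N), QuotientGroup.mk y} ≤
        Subgroup.zpowers (QuotientGroup.mk x : G ⧸ N) := by
      rw [Subgroup.closure_le]
      rintro z (rfl | rfl)
      · exact Subgroup.mem_zpowers _
      · exact ⟨k, (mk_zpow _ _ _ _).1 hk⟩
    exact isCyclic_of_injective (Subgroup.inclusion hle) (Subgroup.inclusion_injective hle)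

lemma exists_max (hℓ : ℓ.Prime) (N : Subgroup G) (hp : ∀ y : G, y ^ ℓ ∈ N) {y : G} (hy : y ∉ N) :
    ∃ M : Subgroup G, N ≤ M ∧ y ∉ M ∧ IsCyclic (G ⧸ M) := by
  obtain ⟨M, hNM, hM⟩ := zorn_le_nonempty₀ {M : Subgroup G | y ∉ M} (by
    intro c hc hch z hz
    refine ⟨sSup c, ?_, fun s hs => le_sSup hs⟩
    intro h
    rw [Subgroup.mem_sSup_of_directedOn ⟨z, hz⟩ hch.directedOn] at h
    obtain ⟨s, hs, h⟩ := h
    exact hc hs h) N hy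
  refine ⟨M, hNM, hM.prop, ⟨QuotientGroup.mk y, fun z => ?_⟩⟩
  obtain ⟨z, rfl⟩ := QuotientGroup.mk_surjective z
  have hpM : ∀ y : G, y ^ ℓ ∈ M := fun y => hNM (hp y)
  by_cases hz : z ∈ M
  · exact ⟨0, (mk_zpow _ _ _ _).1 (by simpa using hz)⟩
  have : y ∈ M ⊔ Subgroup.zpowers z := by
    by_contra h
    have := hM.le_of_ge (y := M ⊔ Subgroup.zpowers z) h le_sup_left
    exact hz (this (Subgroup.mem_sup_right (Subgroup.mem_zpowers z)))
  obtain ⟨m, hm, w, ⟨k, rfl⟩, e⟩ := Subgroup.mem_sup.1 this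
  have h1 : y / z ^ k ∈ M := by rw [← e]; simpa using hm
  obtain ⟨j, hj⟩ := gen_swap hℓ M hpM h1 hM.prop z (m := 1) (by simp)
  exact ⟨j, (mk_zpow _ _ _ _).1 hj⟩

lemma r2_aux {G : Type*} [CommGroup G] (x w v : G) (k a c : ℤ) :
    x ^ (k * a - c) * (w ^ (1 - a) / v ^ (1 - c)) =
      (w * (x ^ k / w) ^ a) / (v * (x / v) ^ c) := by
  simp only [mul_zpow, inv_zpow, zpow_sub, zpow_mul, zpow_one, div_eq_mul_inv, mul_inv, inv_inv]
  generalize (x ^ k) ^ a = X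
  ac_rfl

end grp

section fld
variable {K : Type*} [Field K] {ℓ : ℕ}

lemma rigid_iff (hℓ : ℓ.Prime) (N : Subgroup Kˣ) (hp : ∀ y : Kˣ, y ^ ℓ ∈ N) :
    IsRigid N ↔ ∀ x u : Kˣ, x ∉ N → (u : K) = 1 - x → ∃ k : ℤ, u / x ^ k ∈ N := by
  constructor
  · intro h x u hx hu
    have h0 : (1 : K) - x ≠ 0 := hu ▸ u.ne_zero
    have := (cyc_closure_iff hℓ N hp hx _).1 (h x hx h0)
    have e : Units.mk0 ((1 : K) - x) h0 = u := by ext; simp [hu]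
    rwa [e] at this
  · intro h x hx h0
    exact (cyc_closure_iff hℓ N hp hx _).2 (h x _ hx rfl)

lemma le_Hbold (T : Subgroup Kˣ) : T ≤ Hbold T := le_sInf fun _ h => h.1.1

lemma R0 (hℓ : ℓ.Prime) (T : Subgroup Kˣ) (hp : ∀ y : Kˣ, y ^ ℓ ∈ T) {x u : Kˣ}
    (hx : x ∉ Hbold T) (hu : (u : K) = 1 - x) : ∃ k : ℤ, u / x ^ k ∈ T := by
  simp only [Hbold, Subgroup.mem_sInf, not_forall] at hx
  obtain ⟨H1, ⟨⟨hT1, -⟩, hr⟩, hx1⟩ := hx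
  by_contra hk
  have hn : u ∉ T ⊔ Subgroup.zpowers x := by
    intro h
    obtain ⟨m, hm, w, ⟨k, rfl⟩, e⟩ := Subgroup.mem_sup.1 h
    exact hk ⟨k, by rw [← e]; simpa using hm⟩
  obtain ⟨M, hM, huM, hcM⟩ := exists_max hℓ _ (fun y => Subgroup.mem_sup_left (hp y)) hn
  have hTM : T ≤ M := le_sup_left.trans hM
  have := (rigid_iff hℓ (H1 ⊓ M) (fun y => ⟨hT1 (hp y), hTM (hp y)⟩)).1 (hr M hTM hcM) x u
    (fun h => hx1 h.1) hu
  obtain ⟨k, hk⟩ := this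
  apply huM
  have hxM : x ∈ M := hM (Subgroup.mem_sup_right (Subgroup.mem_zpowers x))
  have := mul_mem hk.2 (zpow_mem hxM k)
  rwa [div_mul_cancel] at this

lemma neg_mem' {T : Subgroup Kˣ} (hneg : (-1 : Kˣ) ∈ T) {x : Kˣ} : -x ∈ T ↔ x ∈ T := by
  rw [← neg_one_mul]; exact Subgroup.mul_mem_cancel_left _ hneg

lemma neg_div_mem {T : Subgroup Kˣ} (hneg : (-1 : Kˣ) ∈ T) {x u : Kˣ} {k : ℤ} :
    u / (-x) ^ k ∈ T ↔ u / x ^ k ∈ T := by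
  have : u / (-x) ^ k = (u / x ^ k) / (-1) ^ k := by
    rw [← neg_one_mul, mul_zpow, div_div, mul_comm]
  rw [this]
  rw [div_eq_mul_inv (u / x ^ k)]
  exact Subgroup.mul_mem_cancel_right _ (inv_mem (zpow_mem hneg k))

lemma R1 (hℓ : ℓ.Prime) (T : Subgroup Kˣ) (hp : ∀ y : Kˣ, y ^ ℓ ∈ T) (hneg : (-1 : Kˣ) ∈ T)
    {x u : Kˣ} (hx : x ∉ Hbold T) (hu : (u : K) = 1 + x) : ∃ k : ℤ, u / x ^ k ∈ T := by
  obtain ⟨k, hk⟩ := R0 hℓ T hp (x := -x) (u := u)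
    (fun h => hx ((neg_mem' (le_Hbold T hneg)).1 h)) (by simp [hu])
  exact ⟨k, (neg_div_mem hneg).1 hk⟩

lemma A1 (hℓ : ℓ.Prime) (T : Subgroup Kˣ) (hp : ∀ y : Kˣ, y ^ ℓ ∈ T) (hneg : (-1 : Kˣ) ∈ T)
    {x u : Kˣ} (hx : x ∈ Hbold T) (hxT : x ∉ T) (hu : (u : K) = 1 + x) : u ∈ Hbold T := by
  by_contra h
  obtain ⟨k, hk⟩ := R0 hℓ T hp (x := u) (u := -x) h (by simp [hu])
  have h1 : u ^ k ∈ Hbold T := by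
    have := div_mem ((neg_mem' (le_Hbold T hneg)).2 hx) (le_Hbold T hk)
    rwa [div_div_cancel] at this
  have h2 := bez hℓ (Hbold T) (fun y => le_Hbold T (hp y)) h1 h
  have h3 := mul_mem hk (pow_dvd T hp u h2)
  rw [div_mul_cancel] at h3
  exact hxT ((neg_mem' hneg).1 h3)

lemma W1 (hℓ : ℓ.Prime) (T : Subgroup Kˣ) (hp : ∀ y : Kˣ, y ^ ℓ ∈ T) (hneg : (-1 : Kˣ) ∈ T)
    (hne : T ≠ Hbold T) : ∃ w v : Kˣ, (v : K) = 1 + w ∧ w ∈ Hbold T ∧ v ∈ Hbold T ∧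
      w ∉ T ∧ ∀ k : ℤ, v / w ^ k ∉ T := by
  have : ∃ h ∈ Hbold T, h ∉ T := by
    by_contra h
    push Not at h
    exact hne (le_antisymm (le_Hbold T) h)
  obtain ⟨h, hH, hT⟩ := this
  obtain ⟨M, hTM, hM, hcM⟩ := exists_max hℓ T hp hT
  have : ∃ H', T ≤ H' ∧ IsCyclic (Kˣ ⧸ H') ∧ ¬ IsRigid (M ⊓ H') := by
    by_contra hc
    push Not at hc
    exact hM ((sInf_le (show M ∈ _ from ⟨⟨hTM, hcM⟩, hc⟩) : Hbold T ≤ M) hH)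
  obtain ⟨H', hTH', -, hr⟩ := this
  have hTi : T ≤ M ⊓ H' := le_inf hTM hTH'
  rw [rigid_iff hℓ _ (fun y => hTi (hp y))] at hr
  push Not at hr
  obtain ⟨x, u, hx, hu, hk⟩ := hr
  have hxT : x ∉ T := fun k => hx (hTi k)
  have hkT : ∀ k : ℤ, u / x ^ k ∉ T := fun k h => hk k (hTi h)
  have hxH : x ∈ Hbold T := by
    by_contra h
    obtain ⟨k, h⟩ := R0 hℓ T hp h hu
    exact hkT k h
  have hxT' : -x ∉ T := fun k => hxT ((neg_mem' hneg).1 k)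
  have hxH' : -x ∈ Hbold T := (neg_mem' (le_Hbold T hneg)).2 hxH
  have hu' : (u : K) = 1 + ((-x : Kˣ) : K) := by simp [hu, sub_eq_add_neg]
  exact ⟨-x, u, hu', hxH', A1 hℓ T hp hneg hxH' hxT' hu', hxT',
    fun k h => hkT k ((neg_div_mem hneg).1 h)⟩

lemma add_unit (hℓ : ℓ.Prime) (T : Subgroup Kˣ) (hp : ∀ y : Kˣ, y ^ ℓ ∈ T)
    (hneg : (-1 : Kˣ) ∈ T) {a b q : Kˣ} (h : b / a ∉ Hbold T) (hq : (q : K) = a + b) :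
    ∃ k : ℤ, q / (a * (b / a) ^ k) ∈ T := by
  obtain ⟨k, hk⟩ := R1 hℓ T hp hneg (x := b / a) (u := q / a) h (by
    rw [Units.val_div_eq_div_val, Units.val_div_eq_div_val, hq]
    have := a.ne_zero
    field_simp)
  exact ⟨k, by rwa [div_div] at hk⟩

/-- the key step -/
lemma R2 (hℓ : ℓ.Prime) (T : Subgroup Kˣ) (hp : ∀ y : Kˣ, y ^ ℓ ∈ T) (hneg : (-1 : Kˣ) ∈ T)
    (hne : T ≠ Hbold T)
    {x u : Kˣ} (hx : x ∉ Hbold T) (hu : (u : K) = 1 + x) : u ∈ T ∨ u / x ∈ T := by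
  obtain ⟨w, v, hv, hwH, hvH, hwT, hvT⟩ := W1 hℓ T hp hneg hne
  obtain ⟨k, hk⟩ := R1 hℓ T hp hneg hx hu
  have hTH := le_Hbold T
  have hpH : ∀ y : Kˣ, y ^ ℓ ∈ Hbold T := fun y => hTH (hp y)
  by_cases hd : (ℓ : ℤ) ∣ k
  · left
    have := mul_mem hk (pow_dvd T hp x hd)
    rwa [div_mul_cancel] at this
  right
  have huH : u ∉ Hbold T := by
    intro h
    have : x ^ k ∈ Hbold T := by
      have := div_mem h (hTH hk); rwa [div_div_cancel] at this
    exact hd (bez hℓ _ hpH this hx)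
  have n1 : u / w ∉ Hbold T := fun h => huH (by
    have := mul_mem h hwH; rwa [div_mul_cancel] at this)
  have n2 : x / v ∉ Hbold T := fun h => hx (by
    have := mul_mem h hvH; rwa [div_mul_cancel] at this)
  have q0 : (1 + x + w : K) ≠ 0 := by
    intro h
    apply huH
    have : u = -w := by ext; rw [Units.val_neg, hu]; linear_combination h
    rw [this]; exact (neg_mem' (hTH hneg)).2 hwH
  obtain ⟨a, ha⟩ := add_unit hℓ T hp hneg (q := Units.mk0 _ q0) n1 (by simp [hu]; ring)
  obtain ⟨c, hc⟩ := add_unit hℓ T hp hneg (q := Units.mk0 _ q0) n2 (by simp [hv]; ring)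
  have h1 : (w * (u / w) ^ a) / (v * (x / v) ^ c) ∈ T := by
    have := div_mem hc ha
    rwa [div_div_div_cancel_left] at this
  have h2 : (w * (x ^ k / w) ^ a) / (v * (x / v) ^ c) ∈ T := by
    have := div_mem h1 (zpow_mem hk a)
    have e : (w * (u / w) ^ a) / (v * (x / v) ^ c) / (u / x ^ k) ^ a
      = (w * (x ^ k / w) ^ a) / (v * (x / v) ^ c) := by
      simp only [div_eq_mul_inv, mul_inv, inv_inv, mul_zpow, inv_zpow]
      generalize u ^ a = U
      calc _ = (U * U⁻¹) * (w * ((x ^ k) ^ a * (w ^ a)⁻¹) * (v⁻¹ * ((x ^ c)⁻¹ * v ^ c))) := by ac_rfl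
        _ = _ := by simp
    rwa [e] at this
  have h3 : x ^ (k * a - c) * (w ^ (1 - a) / v ^ (1 - c)) ∈ T := by
    rw [r2_aux]; exact h2
  have h4 : x ^ (k * a - c) ∈ Hbold T := by
    have h5 : w ^ (1 - a) / v ^ (1 - c) ∈ Hbold T := div_mem (zpow_mem hwH _) (zpow_mem hvH _)
    have := div_mem (hTH h3) h5
    rwa [mul_div_cancel_right] at this
  have d1 := bez hℓ _ hpH h4 hx
  have h5 : w ^ (1 - a) / v ^ (1 - c) ∈ T := by
    have := div_mem h3 (pow_dvd T hp x d1)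
    rwa [mul_div_cancel_left] at this
  have hvN : v ∉ T ⊔ Subgroup.zpowers w := by
    intro h
    obtain ⟨m, hm, w, ⟨k, rfl⟩, e⟩ := Subgroup.mem_sup.1 h
    exact hvT k (by rw [← e]; simpa using hm)
  have h6 : v ^ (1 - c) ∈ T ⊔ Subgroup.zpowers w := by
    have := div_mem (Subgroup.mem_sup_right (S := T) (zpow_mem (Subgroup.mem_zpowers w) (1 - a)))
      (Subgroup.mem_sup_left (T := Subgroup.zpowers w) h5)
    rwa [div_div_cancel] at this
  have d2 := bez hℓ _ (fun y => Subgroup.mem_sup_left (hp y)) h6 hvN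
  have h7 : w ^ (1 - a) ∈ T := by
    have := mul_mem h5 (pow_dvd T hp v d2)
    rwa [div_mul_cancel] at this
  have d3 := bez hℓ T hp h7 hwT
  have d4 : (ℓ : ℤ) ∣ k - 1 := by
    have : k - 1 = (k * a - c) + k * (1 - a) - (1 - c) := by ring
    rw [this]
    exact dvd_sub (dvd_add d1 (Dvd.dvd.mul_left d3 k)) d2
  have h8 := mul_mem hk (pow_dvd T hp x d4)
  rwa [zpow_sub, zpow_one, ← div_eq_mul_inv, div_mul_div_cancel] at h8

def toP (T : Subgroup Kˣ) (a : K) : Prop := ∃ t ∈ T, (t : K) = a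

lemma toP_coe {T : Subgroup Kˣ} {x : Kˣ} : toP T (x : K) ↔ x ∈ T :=
  ⟨fun ⟨_, h, e⟩ => Units.ext e ▸ h, fun h => ⟨x, h, rfl⟩⟩

lemma ctx (hℓ : ℓ.Prime) (T : Subgroup Kˣ) (hp : ∀ y : Kˣ, y ^ ℓ ∈ T) (hneg : (-1 : Kˣ) ∈ T)
    (hne : T ≠ Hbold T) : Ctx (toP T) (toP (Hbold T)) where
  T1 := ⟨1, one_mem _, by simp⟩
  T0 := fun ⟨t, _, e⟩ => t.ne_zero e
  Tn := ⟨-1, hneg, by simp⟩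
  Tm := by
    rintro _ _ ⟨s, hs, rfl⟩ ⟨t, ht, rfl⟩
    exact ⟨s * t, mul_mem hs ht, by simp⟩
  Ti := by
    rintro _ ⟨s, hs, rfl⟩
    exact ⟨s⁻¹, inv_mem hs, by simp⟩
  H0 := fun ⟨t, _, e⟩ => t.ne_zero e
  Hm := by
    rintro _ _ ⟨s, hs, rfl⟩ ⟨t, ht, rfl⟩
    exact ⟨s * t, mul_mem hs ht, by simp⟩
  Hi := by
    rintro _ ⟨s, hs, rfl⟩
    exact ⟨s⁻¹, inv_mem hs, by simp⟩
  TH := fun a ⟨t, ht, e⟩ => ⟨t, le_Hbold T ht, e⟩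
  R := by
    intro x x0 hx
    lift x to Kˣ using IsUnit.mk0 x x0
    rw [toP_coe] at hx
    have u0 : (1 + x : K) ≠ 0 := by
      intro h
      apply hx
      have : x = -1 := by ext; rw [Units.val_neg, Units.val_one]; linear_combination h
      rw [this]; exact le_Hbold T hneg
    rcases R2 hℓ T hp hneg hne (u := Units.mk0 _ u0) hx rfl with h | h
    · exact .inl ⟨_, h, rfl⟩
    · exact .inr ⟨_, h, by simp⟩
  A := by
    rintro _ ⟨h, hH, rfl⟩ hT
    rw [toP_coe] at hT
    have u0 : (1 + h : K) ≠ 0 := by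
      intro k
      apply hT
      have : h = -1 := by ext; rw [Units.val_neg, Units.val_one]; linear_combination k
      rw [this]; exact hneg
    exact ⟨_, A1 hℓ T hp hneg (u := Units.mk0 _ u0) hH hT rfl, rfl⟩
  W := by
    obtain ⟨w, v, hv, hwH, hvH, hwT, hvT⟩ := W1 hℓ T hp hneg hne
    refine ⟨w, toP_coe.2 hwH, fun h => hwT (toP_coe.1 h), ?_⟩
    rw [← hv, ← Units.val_div_eq_div_val, toP_coe, toP_coe, toP_coe]
    exact ⟨hvH, by simpa using hvT 0, by simpa using hvT 1⟩

lemma mem_unitGroup (O : ValuationSubring K) (x : Kˣ) :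
    x ∈ O.unitGroup ↔ (x : K) ∈ O ∧ (x : K)⁻¹ ∈ O := by
  rw [ValuationSubring.mem_unitGroup_iff, ← ValuationSubring.valuation_le_one_iff,
    ← ValuationSubring.valuation_le_one_iff, map_inv₀]
  have : O.valuation (x : K) ≠ 0 := by simp
  rw [inv_le_one₀ (zero_lt_iff.2 this)]
  constructor
  · intro h; rw [h]; simp
  · exact fun h => le_antisymm h.1 h.2

lemma unit_cond (O : ValuationSubring K) (H : Subgroup Kˣ) :
    O.unitGroup ≤ H ↔ ∀ u : K, u ≠ 0 → u ∈ O → u⁻¹ ∈ O → toP H u := by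
  constructor
  · intro h u u0 h1 h2
    lift u to Kˣ using IsUnit.mk0 u u0
    exact ⟨u, h ((mem_unitGroup O u).2 ⟨h1, h2⟩), rfl⟩
  · intro h u hu
    have := (mem_unitGroup O u).1 hu
    exact toP_coe.1 (h u u.ne_zero this.1 this.2)

/-- first part, valid over any field -/
theorem part1 (hℓ : ℓ.Prime) (T : Subgroup Kˣ) (hp : ∀ y : Kˣ, y ^ ℓ ∈ T) (hneg : (-1 : Kˣ) ∈ T)
    (hne : T ≠ Hbold T) : ∃ O : ValuationSubring K, O.unitGroup ≤ Hbold T ∧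
      (∀ O' : ValuationSubring K, O'.unitGroup ≤ Hbold T → O' ≤ O) ∧
      (∀ a : K, O.valuation a < 1 → ∃ t ∈ T, ((t : Kˣ) : K) = 1 + a) ∧
      T ⊔ O.unitGroup = Hbold T := by
  obtain ⟨O, h1, h2, h3⟩ := (ctx hℓ T hp hneg hne).main
  rw [← unit_cond] at h1
  simp only [← unit_cond] at h2
  have h3' : ∀ a : K, O.valuation a < 1 → ∃ t ∈ T, ((t : Kˣ) : K) = 1 + a := by
    intro a ha
    apply h3
    by_cases a0 : a = 0
    · exact .inl a0
    · right
      rw [← ValuationSubring.valuation_le_one_iff, map_inv₀, not_le]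
      exact (one_lt_inv₀ (zero_lt_iff.2 (by simpa using a0))).2 ha
  refine ⟨O, h1, h2, h3', le_antisymm (sup_le (le_Hbold T) h1) ?_⟩
  intro y hy
  by_contra hn
  obtain ⟨M, hM, hyM, hcM⟩ := exists_max hℓ _ (fun z => Subgroup.mem_sup_left (hp z)) hn
  have hTM : T ≤ M := le_sup_left.trans hM
  refine hyM ((sInf_le (show M ∈ _ from ⟨⟨hTM, hcM⟩, ?_⟩) : Hbold T ≤ M) hy)
  intro H' hTH' hcH'
  have hTi : T ≤ M ⊓ H' := le_inf hTM hTH'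
  rw [rigid_iff hℓ _ (fun y => hTi (hp y))]
  intro x u hx hu
  have gen : ∀ a : K, O.valuation a < 1 → ∀ t : Kˣ, (t : K) = 1 + a → t ∈ T := by
    intro a ha t ht
    obtain ⟨s, hs, e⟩ := h3' a ha
    have : t = s := by ext; rw [ht, e]
    exact this ▸ hs
  rcases lt_trichotomy (O.valuation (x : K)) 1 with h | h | h
  · refine ⟨0, hTi ?_⟩
    have := gen (-x) (by rwa [Valuation.map_neg]) u (by rw [hu]; ring)
    simpa using this
  · by_cases hxM : x ∈ H'
    · exfalso
      exact hx ⟨hM (Subgroup.mem_sup_right ((ValuationSubring.mem_unitGroup_iff _ _).2 h)), hxM⟩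
    obtain ⟨k, hk⟩ := cyc_gen hℓ H' (fun y => hTH' (hp y)) hcH' hxM u
    suffices hs : u / x ^ k ∈ M from ⟨k, hs, hk⟩
    have hxM : x ∈ M := hM (Subgroup.mem_sup_right ((ValuationSubring.mem_unitGroup_iff _ _).2 h))
    refine div_mem ?_ (zpow_mem hxM k)
    have hle : O.valuation (u : K) ≤ 1 := by
      rw [hu]
      refine (Valuation.map_sub _ _ _).trans ?_
      simp [h]
    rcases hle.lt_or_eq with hlt | heq
    · exfalso
      refine hx (hTi (gen (-u) (by rwa [Valuation.map_neg]) x ?_))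
      rw [hu]; ring
    · exact hM (Subgroup.mem_sup_right ((ValuationSubring.mem_unitGroup_iff _ _).2 heq))
  · refine ⟨1, hTi ?_⟩
    rw [zpow_one]
    have h0 : 0 < O.valuation (x : K) := zero_lt_one.trans h
    have := gen (-(x : K)⁻¹) (by
      rw [Valuation.map_neg, map_inv₀]; exact inv_lt_one_of_one_lt₀ h) (-(u / x)) (by
      rw [Units.val_neg, Units.val_div_eq_div_val, hu]
      have := x.ne_zero
      field_simp; ring)
    exact (neg_mem' hneg).1 this

end fld
end Stmt9
namespace Stmt9

/-- the residue characteristic computation -/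
lemma res_aux {L : Type*} [Field L] {ℓ : ℕ} (hℓ : ℓ.Prime) (O : ValuationSubring L)
    (T : Subgroup Lˣ) (hp : ∀ x : Lˣ, x ^ ℓ ∈ T)
    (h1 : ∀ a : L, O.valuation a < 1 → ∃ t ∈ T, ((t : Lˣ) : L) = 1 + a)
    {s a : L} (hs : 1 ≤ O.valuation s) (hl0 : (ℓ : L) ≠ 0)
    (hls : O.valuation (ℓ * s) < 1) (ha : a ^ ℓ = 1 + ℓ * s) : toP T (ℓ * s) := by
  have s0 : s ≠ 0 := by
    rintro rfl
    simp at hs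
  have hl : O.valuation (ℓ : L) < 1 := by
    refine lt_of_le_of_lt ?_ hls
    rw [map_mul]
    exact le_mul_of_one_le_right' hs
  have haO : O.valuation a ≤ 1 := by
    have : O.valuation a ^ ℓ ≤ 1 := by
      rw [← map_pow, ha]
      refine (Valuation.map_add _ _ _).trans ?_
      rw [map_one]; exact max_le le_rfl hls.le
    exact (pow_le_one_iff hℓ.ne_zero).1 this
  have hbO : a - 1 ∈ O := sub_mem ((O.valuation_le_one_iff _).1 haO) (one_mem _)
  obtain ⟨r, hr⟩ := exists_add_pow_prime_eq hℓ (⟨a - 1, hbO⟩ : O) 1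
  have hr := congrArg Subtype.val hr
  push_cast at hr
  set b := a - 1 with hb
  have e1 : (ℓ : L) * s = b ^ ℓ + ℓ * b * r := by
    have : b + 1 = a := by rw [hb]; ring
    rw [this, ha] at hr
    linear_combination hr
  have hrO : O.valuation (r : L) ≤ 1 := (O.valuation_le_one_iff _).2 r.2
  have hbv : O.valuation b ≤ 1 := (O.valuation_le_one_iff _).2 hbO
  have hb1 : O.valuation b < 1 := by
    have : O.valuation b ^ ℓ < 1 := by
      rw [← map_pow]
      have : b ^ ℓ = ℓ * s - ℓ * b * r := by rw [e1]; ring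
      rw [this]
      refine Valuation.map_sub_lt _ hls ?_
      rw [map_mul, map_mul]
      exact mul_lt_one_of_lt_of_le (mul_lt_one_of_lt_of_le hl hbv) hrO
    exact (pow_lt_one_iff hℓ.ne_zero).1 this
  have hq : O.valuation (-(b * r / s)) < 1 := by
    rw [Valuation.map_neg, map_div₀, map_mul]
    have h2 : O.valuation b * O.valuation (r : L) < 1 := mul_lt_one_of_lt_of_le hb1 hrO
    exact (div_lt_one₀ (zero_lt_one.trans_le hs)).2 (h2.trans_le hs)
  obtain ⟨t, ht, et⟩ := h1 _ hq
  have e2 : (ℓ : L) * s * t = b ^ ℓ := by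
    rw [et]; field_simp; linear_combination e1
  have b0 : b ≠ 0 := by
    intro h
    rw [h, zero_pow hℓ.ne_zero] at e2
    exact mul_ne_zero (mul_ne_zero hl0 s0) t.ne_zero e2
  refine ⟨(Units.mk0 b b0) ^ ℓ / t, div_mem (hp _) ht, ?_⟩
  rw [Units.val_div_eq_div_val, Units.val_pow_eq_pow_val, Units.val_mk0, ← e2]
  field_simp

end Stmt9

open Stmt9 in
/-- with `char K ≠ ℓ`, `μ_ℓ ⊆ K`, `K^{×ℓ} ⊆ T`, `-1 ∈ T`, `T ≠ 𝐇(T)` and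
`H := 𝐇(T)`; if there is `T' ≤ L^×` (where `L = K(√[ℓ]{T})` inside a separable closure)
with `L^{×ℓ} ⊆ T'`, `T = K^× ∩ T'` and `H = K^× ∩ 𝐇(T')`, then `H` is valuative and,
for `v = v_H` the coarsest valuation with `O_v^× ⊆ H`, one has `1 + m_v ⊆ T`,
`T · O_v^× = H`, and `char k(v) ≠ ℓ`. -/
theorem stmt_9 {K : Type*} [Field K] (Ω : Type*) [Field Ω] [Algebra K Ω] [IsSepClosure K Ω]
    (ℓ : ℕ) (hℓ : ℓ.Prime) (hchar : ringChar K ≠ ℓ) (hζ : ∃ ζ : K, IsPrimitiveRoot ζ ℓ)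
    (T : Subgroup Kˣ) (hpow : ∀ x : Kˣ, x ^ ℓ ∈ T) (hneg : (-1 : Kˣ) ∈ T)
    (hHT : T ≠ Hbold T)
    (T' : Subgroup (↥(Lfield Ω ℓ T))ˣ)
    (hpow' : ∀ x : (↥(Lfield Ω ℓ T))ˣ, x ^ ℓ ∈ T')
    (hT' : T = T'.comap (unitsToL Ω ℓ T))
    (hH' : Hbold T = (Hbold T').comap (unitsToL Ω ℓ T)) :
    ∃ O : ValuationSubring K, O.unitGroup ≤ Hbold T ∧
      (∀ O' : ValuationSubring K, O'.unitGroup ≤ Hbold T → O' ≤ O) ∧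
      (∀ a : K, O.valuation a < 1 → ∃ t ∈ T, ((t : Kˣ) : K) = 1 + a) ∧
      T ⊔ O.unitGroup = Hbold T ∧
      ringChar (IsLocalRing.ResidueField ↥O) ≠ ℓ := by
  
  obtain ⟨O, h1, h2, h3, h4⟩ := part1 hℓ T hpow hneg hHT
  refine ⟨O, h1, h2, h3, h4, fun hres => ?_⟩
  have hneg' : (-1 : (↥(Lfield Ω ℓ T))ˣ) ∈ T' := by
    have h := hneg
    rw [hT', Subgroup.mem_comap] at h
    convert h using 1
    ext; simp [unitsToL]
  have hHT' : T' ≠ Hbold T' := by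
    intro h
    rw [← h, ← hT'] at hH'
    exact hHT hH'.symm
  obtain ⟨W, w1, -, w3, -⟩ := part1 hℓ T' hpow' hneg' hHT'
  have hl0 : (ℓ : K) ≠ 0 := by
    intro h
    rcases (Nat.dvd_prime hℓ).1 (ringChar.dvd h) with k | k
    · exact CharP.ringChar_ne_one k
    · exact hchar k
  -- `ℓ` is in the maximal ideal of `O`
  have hlO : O.valuation (ℓ : K) < 1 := by
    have e : ((ℓ : ℕ) : IsLocalRing.ResidueField ↥O) = 0 := by
      rw [← hres]; exact ringChar.Nat.cast_ringChar
    rw [← map_natCast (IsLocalRing.residue ↥O), IsLocalRing.residue_eq_zero_iff,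
      ValuationSubring.valuation_lt_one_iff] at e
    simpa using e
  -- comparison of the valuations
  have hcomap : W.comap (algebraMap K ↥(Lfield Ω ℓ T)) ≤ O := by
    apply h2
    intro x hx
    rw [mem_unitGroup, ValuationSubring.mem_comap, ValuationSubring.mem_comap, map_inv₀] at hx
    rw [hH', Subgroup.mem_comap]
    exact w1 ((mem_unitGroup _ _).2 hx)
  have hval : ∀ y : K, O.valuation y < 1 →
      W.valuation (algebraMap K ↥(Lfield Ω ℓ T) y) < 1 := by
    intro y hy
    by_cases y0 : y = 0
    · simp [y0]
    by_contra hn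
    have hn := not_lt.1 hn
    have hm : y⁻¹ ∈ W.comap (algebraMap K ↥(Lfield Ω ℓ T)) := by
      rw [ValuationSubring.mem_comap, ← ValuationSubring.valuation_le_one_iff, map_inv₀, map_inv₀]
      exact inv_le_one_of_one_le₀ hn
    have hm := hcomap hm
    rw [← ValuationSubring.valuation_le_one_iff, map_inv₀,
      inv_le_one₀ (zero_lt_iff.2 (by simpa using y0))] at hm
    exact absurd hy (not_lt.2 hm)
  have key : ∀ s : Kˣ, s ∈ O.unitGroup →
      1 ≤ W.valuation (algebraMap K ↥(Lfield Ω ℓ T) s) →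
      Units.mk0 (ℓ : K) hl0 * s ∈ T := by
    intro s hs hs1
    have hls : O.valuation ((ℓ : K) * s) < 1 := by
      rw [map_mul, (ValuationSubring.mem_unitGroup_iff _ _).1 hs, mul_one]; exact hlO
    obtain ⟨t, ht, et⟩ := h3 _ hls
    have : IsSepClosed Ω := IsSepClosure.sep_closed K
    have : NeZero ((ℓ : ℕ) : Ω) := ⟨by
      rw [← map_natCast (algebraMap K Ω)]
      exact (map_ne_zero _).2 hl0⟩
    obtain ⟨α, hα⟩ := IsSepClosed.exists_pow_nat_eq (algebraMap K Ω (t : K)) ℓ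
    have hαL : α ∈ Lfield Ω ℓ T :=
      IntermediateField.subset_adjoin _ _ ⟨t, ht, hα.symm⟩
    have := res_aux hℓ W T' hpow' w3 (s := algebraMap K ↥(Lfield Ω ℓ T) s)
      (a := ⟨α, hαL⟩) hs1
      (by rw [← map_natCast (algebraMap K ↥(Lfield Ω ℓ T))]; exact (map_ne_zero _).2 hl0)
      (by
        have := hval _ hls
        rwa [map_mul, map_natCast] at this)
      (by
        rw [← map_natCast (algebraMap K ↥(Lfield Ω ℓ T)), ← map_mul,
          ← map_one (algebraMap K ↥(Lfield Ω ℓ T)), ← map_add, ← et]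
        apply Subtype.ext
        exact hα)
    rw [hT', Subgroup.mem_comap, ← toP_coe]
    convert this using 1
    simp [unitsToL]
  have key1 : Units.mk0 (ℓ : K) hl0 * 1 ∈ T := key 1 (one_mem _) (by simp)
  rw [mul_one] at key1
  have key2 : ∀ s : Kˣ, s ∈ O.unitGroup →
      1 ≤ W.valuation (algebraMap K ↥(Lfield Ω ℓ T) s) → s ∈ T := fun s hs hs1 =>
    (Subgroup.mul_mem_cancel_left _ key1).1 (key s hs hs1)
  apply hHT
  rw [← h4, left_eq_sup]
  intro u hu
  rcases le_total 1 (W.valuation (algebraMap K ↥(Lfield Ω ℓ T) u)) with k | k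
  · exact key2 u hu k
  · rw [← inv_mem_iff]
    refine key2 _ (inv_mem hu) ?_
    rw [Units.val_inv_eq_inv_val, map_inv₀, map_inv₀]
    exact (one_le_inv₀ (zero_lt_iff.2 (by simp))).2 k
end

section
/- Let K be an arbitrary field and ℓ a prime. For every v ∈ 𝒱_K, the subgroup 𝔘_v^1 (generated by 1+m_v, −1 and K^{×ℓ}) belongs to 𝒯_K, and the map v ↦ 𝔘_v^1 is a bijection from 𝒱_K onto 𝒯_K. -/
/-- The subgroup `F^{×ℓ}` of `ℓ`-th powers of `F^×`. -/
def powSub (F : Type*) [Field F] (ℓ : ℕ) : Subgroup Fˣ :=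
  MonoidHom.range (powMonoidHom ℓ : Fˣ →* Fˣ)

/-- The subgroup `⟨F^{×ℓ}, -1⟩` of `F^×`. -/
def smallSub (F : Type*) [Field F] (ℓ : ℕ) : Subgroup Fˣ :=
  powSub F ℓ ⊔ Subgroup.closure {(-1 : Fˣ)}

/-- `Γ_v = K^×/O_v^×` has no nontrivial `ℓ`-divisible convex subgroup. -/
def NoLDivConvex {K : Type*} [Field K] (ℓ : ℕ) (O : ValuationSubring K) : Prop :=
  ∀ D : Subgroup Kˣ, O.unitGroup ≤ D →
    (∀ x ∈ D, ∀ y : Kˣ, 1 ≤ O.valuation (y : K) →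
      O.valuation (y : K) ≤ O.valuation (x : K) → y ∈ D) →
    (∀ x ∈ D, ∃ z ∈ D, z ^ ℓ / x ∈ O.unitGroup) →
    D = O.unitGroup

/-- The subgroup `𝔘_v^1 = ⟨1 + m_v, -1, K^{×ℓ}⟩` of `K^×`. -/
def U1v {K : Type*} [Field K] (ℓ : ℕ) (O : ValuationSubring K) : Subgroup Kˣ :=
  Subgroup.closure {u : Kˣ | ∃ a : K, O.valuation a < 1 ∧ (u : K) = 1 + a} ⊔
    Subgroup.closure {(-1 : Kˣ)} ⊔ powSub K ℓ

/-- The collection `𝒱_K` of valuations of `K`: `Γ_v` has no nontrivial `ℓ`-divisible convex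
subgroup, `k(v)^×/⟨k(v)^{×ℓ}, -1⟩` is non-cyclic, and `𝐇(⟨k(v)^{×ℓ}, -1⟩) = k(v)^×`. -/
def VK (K : Type*) [Field K] (ℓ : ℕ) : Set (ValuationSubring K) :=
  {O | NoLDivConvex ℓ O ∧
    ¬ IsCyclic ((IsLocalRing.ResidueField O)ˣ ⧸ smallSub (IsLocalRing.ResidueField O) ℓ) ∧
    Hbold (smallSub (IsLocalRing.ResidueField O) ℓ) = ⊤}

/-- The collection `𝒯_K` of subgroups `T ≤ K^×`: `K^{×ℓ} ⊆ T`, `-1 ∈ T`, `T ≠ 𝐇(T)` and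
`T ≤ 𝐇(T)` is minimal. -/
def TK (K : Type*) [Field K] (ℓ : ℕ) : Set (Subgroup Kˣ) :=
  {T | (∀ x : Kˣ, x ^ ℓ ∈ T) ∧ (-1 : Kˣ) ∈ T ∧ T ≠ Hbold T ∧
    ∀ T' : Subgroup Kˣ, (∀ x : Kˣ, x ^ ℓ ∈ T') → (-1 : Kˣ) ∈ T' → T' ≤ T → T' ≠ T →
      ¬ (Hbold T' ≤ Hbold T)}

/-- membership of a field element in a subgroup of units -/
def mm {F : Type*} [Field F] (T : Subgroup Fˣ) (z : F) : Prop := ∃ u ∈ T, (u : F) = z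

/-- `x`, `y` are independent modulo `T` -/
def Ind {F : Type*} [Field F] (ℓ : ℕ) (T : Subgroup Fˣ) (x y : F) : Prop :=
  x ≠ 0 ∧ y ≠ 0 ∧ ∀ i j : ℤ, mm T (x ^ i * y ^ j) → (ℓ : ℤ) ∣ i ∧ (ℓ : ℤ) ∣ j

theorem not_dvd_one {ℓ : ℕ} (hℓ : ℓ.Prime) : ¬ (ℓ : ℤ) ∣ 1 := by
  intro h
  exact hℓ.one_lt.ne' (Nat.dvd_one.mp (by exact_mod_cast h))

section basics
variable {F : Type*} [Field F] {T : Subgroup Fˣ}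

theorem mm_coe {u : Fˣ} : mm T (u : F) ↔ u ∈ T :=
  ⟨fun ⟨w, hw, h⟩ => by rwa [← Units.ext h], fun h => ⟨u, h, rfl⟩⟩

theorem mm.ne {z : F} (h : mm T z) : z ≠ 0 := by
  obtain ⟨u, _, rfl⟩ := h; exact u.ne_zero

theorem mm_one : mm T (1 : F) := ⟨1, T.one_mem, by simp⟩

theorem mm.mul {z w : F} (h : mm T z) (h' : mm T w) : mm T (z * w) := by
  obtain ⟨u, hu, rfl⟩ := h; obtain ⟨v, hv, rfl⟩ := h'
  exact ⟨u * v, T.mul_mem hu hv, by simp⟩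

theorem mm.inv {z : F} (h : mm T z) : mm T z⁻¹ := by
  obtain ⟨u, hu, rfl⟩ := h
  exact ⟨u⁻¹, T.inv_mem hu, by simp⟩

theorem mm.div {z w : F} (h : mm T z) (h' : mm T w) : mm T (z / w) := by
  rw [div_eq_mul_inv]; exact h.mul h'.inv

theorem mm.zpow {z : F} (h : mm T z) (n : ℤ) : mm T (z ^ n) := by
  obtain ⟨u, hu, rfl⟩ := h
  exact ⟨u ^ n, T.zpow_mem hu n, by simp⟩

theorem mm.mono {H : Subgroup Fˣ} (hTH : T ≤ H) {z : F} (h : mm T z) : mm H z := by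
  obtain ⟨u, hu, rfl⟩ := h
  exact ⟨u, hTH hu, rfl⟩

theorem mm_negone (hn : (-1 : Fˣ) ∈ T) : mm T (-1 : F) := ⟨-1, hn, by simp⟩

theorem mm.neg (hn : (-1 : Fˣ) ∈ T) {z : F} (h : mm T z) : mm T (-z) := by
  rw [← neg_one_mul]; exact (mm_negone hn).mul h

theorem mm_zpow_dvd {ℓ : ℕ} (hp : ∀ x : Fˣ, x ^ ℓ ∈ T) {z : F} (hz : z ≠ 0) {n : ℤ}
    (hn : (ℓ : ℤ) ∣ n) : mm T (z ^ n) := by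
  obtain ⟨k, rfl⟩ := hn
  rw [zpow_mul]
  exact mm.zpow ⟨(Units.mk0 z hz) ^ ℓ, hp _, by simp⟩ k

theorem mm_of_zpow {ℓ : ℕ} (hℓ : ℓ.Prime) (hp : ∀ x : Fˣ, x ^ ℓ ∈ T) {z : F} (hz : z ≠ 0) {n : ℤ}
    (hn : ¬ (ℓ : ℤ) ∣ n) (h : mm T (z ^ n)) : mm T z := by
  have hc : IsCoprime (ℓ : ℤ) n :=
    (Nat.prime_iff_prime_int.mp hℓ).coprime_iff_not_dvd.mpr hn
  obtain ⟨a, b, hab⟩ := hc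
  have h1 : mm T (z ^ (a * ℓ)) := mm_zpow_dvd hp hz (Dvd.intro_left _ rfl)
  have h2 : mm T (z ^ (b * n)) := by rw [mul_comm, zpow_mul]; exact h.zpow b
  have := h1.mul h2
  rwa [← zpow_add₀ hz, hab, zpow_one] at this

theorem Ind.symm {ℓ : ℕ} {x y : F} (h : Ind ℓ T x y) : Ind ℓ T y x :=
  ⟨h.2.1, h.1, fun i j hm => (h.2.2 j i (by rwa [mul_comm])).symm⟩

theorem Ind.not_left {ℓ : ℕ} (hℓ : ℓ.Prime) {x y : F} (h : Ind ℓ T x y) : ¬ mm T x := by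
  intro hx
  have := (h.2.2 1 0 (by simpa using hx)).1
  exact not_dvd_one hℓ this

theorem Ind.inv {ℓ : ℕ} (hn : (-1 : Fˣ) ∈ T) {x : F} (h : Ind ℓ T x (1 - x)) :
    Ind ℓ T x⁻¹ (1 - x⁻¹) := by
  obtain ⟨h1, h2, h3⟩ := h
  have e : 1 - x⁻¹ = (-1) * (x⁻¹ * (1 - x)) := by field_simp; ring
  refine ⟨inv_ne_zero h1, by rw [e]; exact mul_ne_zero (by simp) (mul_ne_zero (inv_ne_zero h1) h2), ?_⟩
  intro i j hm
  have hm2 : mm T (x ^ (-i - j) * (1 - x) ^ j) := by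
    have := ((mm_negone hn).zpow j).inv.mul hm
    rw [e] at this
    convert this using 1
    rw [mul_zpow, mul_zpow, inv_zpow', inv_zpow', sub_eq_add_neg, zpow_add₀ h1]
    have : ((-1 : F)) ^ j ≠ 0 := zpow_ne_zero _ (by simp)
    field_simp
  obtain ⟨a, b⟩ := h3 _ _ hm2
  exact ⟨by have := dvd_add a b; simpa using this, b⟩

/-- dependence gives a power relation -/
theorem dep_pow {ℓ : ℕ} (hℓ : ℓ.Prime) (hp : ∀ x : Fˣ, x ^ ℓ ∈ T) {x y : F} (hx : x ≠ 0)
    (hy : y ≠ 0) (hxT : ¬ mm T x) (h : ¬ Ind ℓ T x y) : ∃ k : ℤ, mm T (y / x ^ k) := by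
  have : ∃ i j : ℤ, mm T (x ^ i * y ^ j) ∧ ¬ ((ℓ : ℤ) ∣ i ∧ (ℓ : ℤ) ∣ j) := by
    by_contra! hc
    exact h ⟨hx, hy, fun i j hm => hc i j hm⟩
  obtain ⟨i, j, hm, hij⟩ := this
  have hj : ¬ (ℓ : ℤ) ∣ j := by
    intro hj
    have hi : ¬ (ℓ : ℤ) ∣ i := fun hi => hij ⟨hi, hj⟩
    apply hxT
    apply mm_of_zpow hℓ hp hx hi
    have := hm.div (mm_zpow_dvd hp hy hj)
    rwa [mul_div_cancel_right₀ _ (zpow_ne_zero _ hy)] at this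
  obtain ⟨a, b, hab⟩ : IsCoprime (ℓ : ℤ) j :=
    (Nat.prime_iff_prime_int.mp hℓ).coprime_iff_not_dvd.mpr hj
  refine ⟨-(i * b), ?_⟩
  have h1 := (hm.zpow b).mul (mm_zpow_dvd hp hy (Dvd.intro_left a rfl : (ℓ : ℤ) ∣ a * ℓ))
  convert h1 using 1
  rw [mul_zpow, ← zpow_mul, ← zpow_mul, mul_assoc, ← zpow_add₀ hy, zpow_neg, div_inv_eq_mul,
    show j * b + a * ℓ = 1 by linarith, zpow_one, mul_comm]

end basics

section hb
variable {F : Type*} [Field F] {T : Subgroup Fˣ}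

theorem le_Hbold : T ≤ Hbold T := le_sInf fun _ h => h.1.1

/-- separating a point from a subgroup containing `ℓ`-th powers -/
theorem exists_sep {G : Type*} [CommGroup G] {ℓ : ℕ} (hℓ : ℓ.Prime) (M : Subgroup G)
    (hp : ∀ x : G, x ^ ℓ ∈ M) (y : G) (hy : y ∉ M) :
    ∃ H : Subgroup G, M ≤ H ∧ y ∉ H ∧ IsCyclic (G ⧸ H) := by
  obtain ⟨H, hMH, hmax⟩ := zorn_le_nonempty₀ {H : Subgroup G | y ∉ H} (by
    intro c hc hch z hz
    refine ⟨sSup c, ?_, fun w hw => le_sSup hw⟩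
    intro hmem
    rw [Subgroup.mem_sSup_of_directedOn ⟨z, hz⟩ hch.directedOn] at hmem
    obtain ⟨s, hs, hys⟩ := hmem
    exact hc hs hys) M hy
  have hyH : y ∉ H := hmax.prop
  refine ⟨H, hMH, hyH, ⟨QuotientGroup.mk y, ?_⟩⟩
  intro q
  obtain ⟨z, rfl⟩ := QuotientGroup.mk_surjective q
  by_cases hz : z ∈ H
  · rw [(QuotientGroup.eq_one_iff z).mpr hz]; exact (Subgroup.zpowers (QuotientGroup.mk y : G ⧸ H)).one_mem
  have : y ∈ H ⊔ Subgroup.zpowers z := by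
    by_contra hc
    have := hmax.le_of_ge (y := H ⊔ Subgroup.zpowers z) hc le_sup_left
    exact hz (this (Subgroup.mem_sup_right (Subgroup.mem_zpowers z)))
  obtain ⟨h, hh, w, hw, rfl⟩ := Subgroup.mem_sup.mp this
  obtain ⟨n, rfl⟩ := Subgroup.mem_zpowers_iff.mp hw
  have hn : ¬ (ℓ : ℤ) ∣ n := by
    rintro ⟨k, rfl⟩
    apply hyH
    apply H.mul_mem hh
    rw [zpow_mul]
    exact H.zpow_mem (by rw [zpow_natCast]; exact hMH (hp z)) k
  obtain ⟨a, b, hab⟩ : IsCoprime (ℓ : ℤ) n :=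
    (Nat.prime_iff_prime_int.mp hℓ).coprime_iff_not_dvd.mpr hn
  refine Subgroup.mem_zpowers_iff.mpr ⟨b, ?_⟩
  rw [← QuotientGroup.mk_zpow, QuotientGroup.eq]
  have h1 : ((h * z ^ n) ^ b)⁻¹ * z = (h ^ b)⁻¹ * (z ^ ℓ) ^ a := by
    rw [mul_zpow, mul_inv, mul_assoc, ← zpow_mul, ← zpow_natCast, ← zpow_mul]
    congr 1
    nth_rw 2 [← zpow_one z]
    rw [← zpow_neg, ← zpow_add]
    congr 1
    linarith
  rw [h1]
  exact H.mul_mem (H.inv_mem (H.zpow_mem hh b)) (H.zpow_mem (hMH (hp z)) a)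

theorem Hbold_ind {ℓ : ℕ} (hℓ : ℓ.Prime) (hp : ∀ x : Fˣ, x ^ ℓ ∈ T) {x : F}
    (h : Ind ℓ T x (1 - x)) : mm (Hbold T) x := by
  obtain ⟨x, rfl⟩ : ∃ u : Fˣ, (u : F) = x := ⟨Units.mk0 x h.1, rfl⟩
  rw [mm_coe]
  refine Subgroup.mem_sInf.mpr ?_
  rintro H ⟨⟨hTH, _⟩, hH⟩
  by_contra hxH
  set y : Fˣ := Units.mk0 (1 - (x : F)) h.2.1 with hy
  have hyM : y ∉ T ⊔ Subgroup.zpowers x := by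
    intro hc
    obtain ⟨t, ht, w, hw, e⟩ := Subgroup.mem_sup.mp hc
    obtain ⟨n, rfl⟩ := Subgroup.mem_zpowers_iff.mp hw
    have := (h.2.2 (-n) 1 ⟨t, ht, by
      have e' : (t : F) * (x : F) ^ n = 1 - x := by
        have := congrArg (fun u : Fˣ => (u : F)) e
        simpa [hy] using this
      rw [← e', zpow_neg, zpow_one]
      have : (x : F) ^ n ≠ 0 := zpow_ne_zero _ x.ne_zero
      field_simp⟩).2
    exact not_dvd_one hℓ this
  obtain ⟨H', hMH, hyH', hcyc⟩ := exists_sep hℓ _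
    (fun z => Subgroup.mem_sup_left (hp z)) y hyM
  have hTH' : T ≤ H' := le_sup_left.trans hMH
  have hxH' : x ∈ H' := hMH (Subgroup.mem_sup_right (Subgroup.mem_zpowers x))
  obtain ⟨⟨c, hc⟩, hgen⟩ := hH H' hTH' hcyc x (fun hx => hxH hx.1) h.2.1
  obtain ⟨c, rfl⟩ := QuotientGroup.mk_surjective c
  obtain ⟨m, hm⟩ := hgen ⟨_, Subgroup.subset_closure (Set.mem_insert _ _)⟩
  obtain ⟨n, hn⟩ := hgen ⟨_, Subgroup.subset_closure (Set.mem_insert_of_mem _ rfl)⟩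
  have hm := congrArg Subtype.val hm
  have hn := congrArg Subtype.val hn
  simp only [Subgroup.coe_zpow] at hm hn
  rw [← QuotientGroup.mk_zpow, QuotientGroup.eq] at hm hn
  have hpw : ∀ k : ℤ, (ℓ : ℤ) ∣ k → c ^ k ∈ T := by
    rintro _ ⟨k, rfl⟩
    rw [zpow_mul, zpow_natCast]
    exact T.zpow_mem (hp c) k
  have hmn : ¬ (ℓ : ℤ) ∣ m := by
    intro hd
    exact hxH (((H.mul_mem_cancel_left (H.inv_mem (hTH (hpw m hd))))).mp hm.1)
  have hcm : c ^ m ∈ H' := by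
    have := (H'.mul_mem_cancel_right hxH').mp hm.2
    exact H'.inv_mem_iff.mp this
  have hcH : c ∈ H' := by
    have h1 := mm_of_zpow (T := H') hℓ (fun z => hTH' (hp z)) c.ne_zero hmn
      ⟨c ^ m, hcm, by simp⟩
    exact mm_coe.mp h1
  exact hyH' ((H'.mul_mem_cancel_left (H'.inv_mem (H'.zpow_mem hcH n))).mp hn.2)

theorem Hbold_le {ℓ : ℕ} (hℓ : ℓ.Prime) (hp : ∀ x : Fˣ, x ^ ℓ ∈ T) {M : Subgroup Fˣ}
    (hTM : T ≤ M) (hM : ∀ x : F, Ind ℓ T x (1 - x) → mm M x) : Hbold T ≤ M := by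
  intro y hy
  by_contra hyM
  obtain ⟨H, hMH, hyH, hcyc⟩ := exists_sep hℓ M (fun z => hTM (hp z)) y hyM
  refine hyH (Subgroup.mem_sInf.mp hy H ⟨⟨hTM.trans hMH, hcyc⟩, ?_⟩)
  intro H' hTH' hcyc' x hx h
  by_cases hI : Ind ℓ T (x : F) (1 - x)
  · have h1 : x ∈ H := hMH (mm_coe.mp (hM _ hI))
    have h2 : Units.mk0 (1 - (x : F)) h ∈ H := by
      apply hMH
      rw [← mm_coe]
      exact hM _ (by simpa using hI.symm)
    let f : Fˣ ⧸ (H ⊓ H') →* Fˣ ⧸ H' := QuotientGroup.map _ _ (MonoidHom.id _) inf_le_right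
    refine isCyclic_of_injective (f.comp (Subgroup.subtype _)) ?_
    rw [injective_iff_map_eq_one]
    rintro ⟨q, hq⟩ hq1
    have hqH : q ∈ H.map (QuotientGroup.mk' (H ⊓ H')) := by
      refine (Subgroup.closure_le _).mpr ?_ hq
      rintro _ (rfl | rfl)
      · exact ⟨x, h1, rfl⟩
      · exact ⟨_, h2, rfl⟩
    obtain ⟨w, hw, rfl⟩ := hqH
    have hw' : w ∈ H' := by
      have : (QuotientGroup.mk w : Fˣ ⧸ H') = 1 := hq1
      exact (QuotientGroup.eq_one_iff w).mp this
    apply Subtype.ext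
    exact (QuotientGroup.eq_one_iff w).mpr ⟨hw, hw'⟩
  · have hxT : ¬ mm T (x : F) := fun hm =>
      hx ⟨hMH (hTM (mm_coe.mp hm)), hTH' (mm_coe.mp hm)⟩
    obtain ⟨k, u, hu, e⟩ := dep_pow hℓ hp x.ne_zero h hxT hI
    have hle : Subgroup.closure {(QuotientGroup.mk x : Fˣ ⧸ (H ⊓ H')),
      QuotientGroup.mk (Units.mk0 ((1 : F) - (x : F)) h)} ≤
        Subgroup.zpowers (QuotientGroup.mk x : Fˣ ⧸ (H ⊓ H')) := by
      rw [Subgroup.closure_le]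
      rintro _ (rfl | rfl)
      · exact Subgroup.mem_zpowers _
      · refine Subgroup.mem_zpowers_iff.mpr ⟨k, ?_⟩
        rw [← QuotientGroup.mk_zpow, QuotientGroup.eq]
        have : (x ^ k)⁻¹ * Units.mk0 (1 - (x : F)) h = u := by
          ext
          simp [e, div_eq_mul_inv, mul_comm]
        rw [this]
        exact ⟨hMH (hTM hu), hTH' hu⟩
    exact isCyclic_of_injective (Subgroup.inclusion hle) (Subgroup.inclusion_injective hle)

end hb

/-- data for the construction of a valuation ring -/
structure Rig {F : Type*} [Field F] (ℓ : ℕ) (T H : Subgroup Fˣ) : Prop where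
  pr : ℓ.Prime
  hp : ∀ x : Fˣ, x ^ ℓ ∈ T
  hn : (-1 : Fˣ) ∈ T
  le : T ≤ H
  ind : ∀ x : F, Ind ℓ T x (1 - x) → mm H x
  ex : ∃ a : F, Ind ℓ T a (1 - a)

/-- small elements -/
def Sm {F : Type*} [Field F] (T H : Subgroup Fˣ) (x : F) : Prop :=
  x ≠ 0 ∧ ¬ mm H x ∧ mm T (1 - x)

/-- elements of `H` preserving the small elements -/
def Pm {F : Type*} [Field F] (T H : Subgroup Fˣ) (x : F) : Prop :=
  mm H x ∧ ∀ s, Sm T H s → Sm T H (x * s)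

namespace Rig
variable {F : Type*} [Field F] {ℓ : ℕ} {T H : Subgroup Fˣ}

theorem one_sub_ne (R : Rig ℓ T H) {x : F} (hx : ¬ mm H x) : 1 - x ≠ 0 := by
  intro h
  apply hx
  rw [← sub_eq_zero.mp h]
  exact mm_one

theorem dep (R : Rig ℓ T H) {x : F} (hx0 : x ≠ 0) (hx : ¬ mm H x) : ∃ k : ℤ, mm T ((1 - x) / x ^ k) :=
  dep_pow R.pr R.hp hx0 (R.one_sub_ne hx) (fun h => hx (h.mono R.le)) (fun h => hx (R.ind x h))

theorem hpH (R : Rig ℓ T H) : ∀ x : Fˣ, x ^ ℓ ∈ H := fun x => R.le (R.hp x)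

theorem key (R : Rig ℓ T H) {x a : F} (hx0 : x ≠ 0) (hx : ¬ mm H x) (ha : Ind ℓ T a (1 - a)) :
    mm T (1 - x) ∨ (mm T ((1 - x) / x) ∧ mm T ((1 - x / a) / (x / a))) := by
  obtain ⟨i, hi⟩ := R.dep hx0 hx
  have hy0 := R.one_sub_ne hx
  by_cases hiℓ : (ℓ : ℤ) ∣ i
  · left
    have := hi.mul (mm_zpow_dvd R.hp hx0 hiℓ)
    rwa [div_mul_cancel₀ _ (zpow_ne_zero _ hx0)] at this
  right
  have ha0 := ha.1
  have hb0 := ha.2.1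
  have haH : mm H a := R.ind a ha
  have hbH : mm H (1 - a) := R.ind _ (by simpa using ha.symm)
  set b := 1 - a with hb
  set y := 1 - x with hy
  have hyH : ¬ mm H y := by
    intro h
    apply hx
    apply mm_of_zpow R.pr R.hpH hx0 hiℓ
    have := h.div (hi.mono R.le)
    rwa [div_div_cancel₀ hy0] at this
  have hxa : ¬ mm H (x / a) := fun h => hx (by have := h.mul haH; rwa [div_mul_cancel₀ _ ha0] at this)
  have hyb : ¬ mm H (y / b) := fun h => hyH (by have := h.mul hbH; rwa [div_mul_cancel₀ _ hb0] at this)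
  obtain ⟨k, hk⟩ := R.dep (div_ne_zero hx0 ha0) hxa
  obtain ⟨j, hj⟩ := R.dep (div_ne_zero hy0 hb0) hyb
  have hz0 : a - x ≠ 0 := by
    intro h
    have : a = x := sub_eq_zero.mp h
    exact hx (this ▸ haH)
  have e1 : 1 - x / a = (a - x) / a := by field_simp
  have e2 : 1 - y / b = - ((a - x) / b) := by rw [hy]; field_simp; rw [hb]; ring
  -- the relation
  have hrel : mm T (x ^ (k - i * j) * (a ^ (1 - k) * b ^ (j - 1))) := by
    have h3 := ((hj.neg R.hn).div hk).mul (hi.zpow j)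
    convert h3 using 1
    rw [e1, e2]
    have hxk : x ^ k ≠ 0 := zpow_ne_zero _ hx0
    have hxi : x ^ (i * j) ≠ 0 := zpow_ne_zero _ hx0
    have hak : a ^ k ≠ 0 := zpow_ne_zero _ ha0
    have hbj : b ^ j ≠ 0 := zpow_ne_zero _ hb0
    have hyj : y ^ j ≠ 0 := zpow_ne_zero _ hy0
    rw [div_zpow y, div_zpow x, div_zpow y, ← zpow_mul x i j, zpow_sub₀ hx0, zpow_sub₀ ha0, zpow_sub₀ hb0,
      zpow_one, zpow_one]
    generalize x ^ k = X at *
    generalize x ^ (i * j) = X2 at *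
    generalize a ^ k = A at *
    generalize b ^ j = B at *
    generalize y ^ j = Y at *
    field_simp
  have hd : (ℓ : ℤ) ∣ k - i * j := by
    by_contra hc
    apply hx
    apply mm_of_zpow R.pr R.hpH hx0 hc
    have h4 : mm H (a ^ (1 - k) * b ^ (j - 1)) := (haH.zpow _).mul (hbH.zpow _)
    have := (hrel.mono R.le).div h4
    rwa [mul_div_cancel_right₀ _ h4.ne] at this
  have hab : mm T (a ^ (1 - k) * b ^ (j - 1)) := by
    have h4 := mm_zpow_dvd R.hp hx0 hd
    have := hrel.div h4
    rwa [mul_div_cancel_left₀ _ h4.ne] at this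
  obtain ⟨hk1, hj1⟩ := ha.2.2 _ _ hab
  have hi1 : (ℓ : ℤ) ∣ i - 1 := by
    have h5 : (ℓ : ℤ) ∣ -(i * (j - 1)) - (k - i * j) - (1 - k) := 
      dvd_sub (dvd_sub (dvd_neg.mpr (hj1.mul_left i)) hd) hk1
    have e : -(i * (j - 1)) - (k - i * j) - (1 - k) = i - 1 := by ring
    rwa [e] at h5
  constructor
  · have := hi.mul (mm_zpow_dvd R.hp hx0 hi1)
    rw [zpow_sub₀ hx0, zpow_one] at this
    have hxi : x ^ i ≠ 0 := zpow_ne_zero _ hx0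
    convert this using 1
    field_simp
  · have hxa0 := div_ne_zero hx0 ha0
    have := hk.mul (mm_zpow_dvd R.hp hxa0 ((dvd_sub_comm).mp hk1))
    rw [zpow_sub₀ hxa0, zpow_one] at this
    have hxi : (x / a) ^ k ≠ 0 := zpow_ne_zero _ hxa0
    convert this using 1
    generalize x / a = w at *
    field_simp

theorem step1 (R : Rig ℓ T H) {x : F} (hx0 : x ≠ 0) (hx : ¬ mm H x) : mm T (1 - x) ∨ mm T ((1 - x) / x) := by
  obtain ⟨a, ha⟩ := R.ex
  exact (R.key hx0 hx ha).imp_right And.left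

theorem negH (R : Rig ℓ T H) {x : F} (h : mm H x) : mm H (-x) := h.neg (R.le R.hn)

/-- the sum lemma -/
theorem dich (R : Rig ℓ T H) {p q : F} (hp : p ≠ 0) (hq : q ≠ 0) (h : ¬ mm H (q / p)) :
    mm T ((p + q) / p) ∨ mm T ((p + q) / q) := by
  have h1 : ¬ mm H (-(q / p)) := fun h' => h (by simpa using R.negH h')
  rcases R.step1 (neg_ne_zero.mpr (div_ne_zero hq hp)) h1 with h2 | h2
  · left
    convert h2 using 1
    field_simp
    ring
  · right
    convert h2.neg R.hn using 1
    field_simp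
    ring

theorem S_inv_not (R : Rig ℓ T H) {x : F} (h : Sm T H x) : ¬ Sm T H x⁻¹ := by
  intro h'
  apply h.2.1
  have := (h.2.2.div h'.2.2).neg R.hn
  refine mm.mono R.le ?_
  convert this using 1
  have h1 := h.2.2.ne
  have h2 := h'.2.2.ne
  have h0 := h.1
  have : x - 1 ≠ 0 := fun h => h1 (by linear_combination -h)
  field_simp
  ring

theorem mem_inv_iff (R : Rig ℓ T H) {x : F} : mm H x⁻¹ ↔ mm H x :=
  ⟨fun h => by simpa using h.inv, fun h => h.inv⟩

theorem S_or (R : Rig ℓ T H) {x : F} (hx0 : x ≠ 0) (hx : ¬ mm H x) : Sm T H x ∨ Sm T H x⁻¹ := by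
  rcases R.step1 hx0 hx with h | h
  · exact Or.inl ⟨hx0, hx, h⟩
  · refine Or.inr ⟨inv_ne_zero hx0, fun h' => hx (R.mem_inv_iff.mp h'), ?_⟩
    convert h.neg R.hn using 1
    field_simp
    ring

theorem mulH (R : Rig ℓ T H) {x h : F} (hx : ¬ mm H x) (hh : mm H h) : ¬ mm H (h * x) := by
  intro h'
  apply hx
  have := h'.div hh
  rwa [mul_div_cancel_left₀ _ hh.ne] at this

/-- `A` preserves smallness -/
theorem S_A (R : Rig ℓ T H) {x a : F} (hx : Sm T H x) (ha : Ind ℓ T a (1 - a)) : Sm T H (a * x) := by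
  have haH := R.ind a ha
  have ha0 := ha.1
  have hx0 := hx.1
  have h1 : ¬ mm H x⁻¹ := fun h => hx.2.1 (R.mem_inv_iff.mp h)
  rcases R.key (inv_ne_zero hx.1) h1 ha with h | ⟨_, h⟩
  · exact absurd ⟨inv_ne_zero hx.1, h1, h⟩ (R.S_inv_not hx)
  · refine ⟨mul_ne_zero ha.1 hx.1, R.mulH hx.2.1 haH, ?_⟩
    convert h.neg R.hn using 1
    field_simp
    ring

theorem S_A' (R : Rig ℓ T H) {x a : F} (hx : Sm T H x) (ha : Ind ℓ T a (1 - a)) : Sm T H (a⁻¹ * x) :=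
  R.S_A hx (ha.inv R.hn)

theorem pre (R : Rig ℓ T H) {x y : F} (hx : Sm T H x) (hy : Sm T H y) :
    mm T (1 - x * y) ∨ mm T ((1 - x * y) / x) := by
  have hx1 := hx.2.2
  have hy1 := hy.2.2
  have hx0 := hx.1
  have e : (1 - x) + x * (1 - y) = 1 - x * y := by ring
  have := R.dich (p := 1 - x) (q := x * (1 - y)) hx1.ne (mul_ne_zero hx.1 hy1.ne) (by
    have := R.mulH hx.2.1 ((hy1.div hx1).mono R.le)
    convert this using 2
    ring)
  rw [e] at this
  refine this.imp (fun h => ?_) (fun h => ?_)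
  · have := h.mul hx1
    rwa [div_mul_cancel₀ _ hx1.ne] at this
  · have := h.mul hy1
    have h1 := hy1.ne
    convert this using 1
    field_simp

theorem prodT (R : Rig ℓ T H) {x y : F} (hx : Sm T H x) (hy : Sm T H y) : mm T (1 - x * y) := by
  obtain ⟨a, ha⟩ := R.ex
  have ha0 := ha.1
  have hx0 := hx.1
  have e : (a * x) * (a⁻¹ * y) = x * y := by field_simp
  rcases R.pre hx hy with h | h
  · exact h
  have h2 := R.pre (R.S_A hx ha) (R.S_A' hy ha)
  rw [e] at h2
  rcases h2 with h2 | h2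
  · exact h2
  exfalso
  apply ha.not_left R.pr
  have h3 := h.div h2
  have : 1 - x * y ≠ 0 := fun h' => h.ne (by rw [h', zero_div])
  convert h3 using 1
  field_simp

theorem prodS (R : Rig ℓ T H) {x y : F} (hx : Sm T H x) (hy : Sm T H y) (h : ¬ mm H (x * y)) : Sm T H (x * y) :=
  ⟨mul_ne_zero hx.1 hy.1, h, R.prodT hx hy⟩

theorem S_neg (R : Rig ℓ T H) {x : F} (hx : Sm T H x) : Sm T H (-x) := by
  refine ⟨neg_ne_zero.mpr hx.1, fun h => hx.2.1 (by simpa using R.negH h), ?_⟩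
  have := (R.prodT hx hx).div hx.2.2
  have h1 := hx.2.2.ne
  convert this using 1
  field_simp
  ring

theorem tripleS' (R : Rig ℓ T H) {x y z : F} (hx : Sm T H x) (hy : Sm T H y) (hz : Sm T H z)
    (h : mm H (x * y)) (hT : ¬ mm T (x * y)) : Sm T H (x * y * z) := by
  have hxy := R.prodT hx hy
  have hzH := R.mulH hz.2.1 h
  have hne : x * y * z ≠ 0 := mul_ne_zero (mul_ne_zero hx.1 hy.1) hz.1
  refine ⟨hne, hzH, ?_⟩
  have h1 := hz.2.2
  have hz0 := hz.1
  have e : (1 - z) + z * (1 - x * y) = 1 - x * y * z := by ring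
  have := R.dich (p := 1 - z) (q := z * (1 - x * y)) h1.ne (mul_ne_zero hz0 hxy.ne) (by
    have := R.mulH hz.2.1 ((hxy.div h1).mono R.le)
    convert this using 2
    ring)
  rw [e] at this
  rcases this with h2 | h2
  · have := h2.mul h1
    rwa [div_mul_cancel₀ _ h1.ne] at this
  rcases R.step1 hne hzH with h3 | h3
  · exact h3
  exfalso
  apply hT
  have h4 := (h2.mul hxy).div h3
  have h5 : 1 - x * y * z ≠ 0 := fun h' => h3.ne (by rw [h', zero_div])
  have h6 := hxy.ne
  have hx0 := hx.1
  have hy0 := hy.1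
  convert h4 using 1
  field_simp

theorem tripleS (R : Rig ℓ T H) {x y z : F} (hx : Sm T H x) (hy : Sm T H y) (hz : Sm T H z)
    (h : mm H (x * y)) : Sm T H (x * y * z) := by
  by_cases hT : mm T (x * y)
  · obtain ⟨a, ha⟩ := R.ex
    have ha0 := ha.1
    have h1 := R.tripleS' (R.S_A hx ha) hy hz
      (by rw [mul_assoc]; exact (R.ind a ha).mul h) (by
        intro h'
        apply ha.not_left R.pr
        have := h'.div hT
        have hxy := hT.ne
        rwa [mul_assoc, mul_div_cancel_right₀ _ hxy] at this)
    have := R.S_A' h1 ha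
    convert this using 1
    field_simp
  · exact R.tripleS' hx hy hz h hT

theorem prodP (R : Rig ℓ T H) {x y : F} (hx : Sm T H x) (hy : Sm T H y) (h : mm H (x * y)) : Pm T H (x * y) :=
  ⟨h, fun _ hs => R.tripleS hx hy hs h⟩

theorem P_mul (R : Rig ℓ T H) {x y : F} (hx : Pm T H x) (hy : Pm T H y) : Pm T H (x * y) :=
  ⟨hx.1.mul hy.1, fun s hs => by rw [mul_assoc]; exact hx.2 _ (hy.2 s hs)⟩

theorem P_neg (R : Rig ℓ T H) {x : F} (hx : Pm T H x) : Pm T H (-x) :=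
  ⟨R.negH hx.1, fun s hs => by rw [neg_mul]; exact R.S_neg (hx.2 s hs)⟩

theorem P_one (R : Rig ℓ T H) : Pm T H (1 : F) := ⟨mm_one, fun s hs => by rwa [one_mul]⟩

theorem P_or (R : Rig ℓ T H) {x : F} (hx : mm H x) : Pm T H x ∨ Pm T H x⁻¹ := by
  by_contra! hc
  obtain ⟨h1, h2⟩ := hc
  have h1 : ∃ s, Sm T H s ∧ ¬ Sm T H (x * s) := by
    by_contra! h; exact h1 ⟨hx, h⟩
  have h2 : ∃ s, Sm T H s ∧ ¬ Sm T H (x⁻¹ * s) := by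
    by_contra! h; exact h2 ⟨hx.inv, h⟩
  obtain ⟨s, hs, h1⟩ := h1
  obtain ⟨t, ht, h2⟩ := h2
  have hx0 := hx.ne
  have hs0 := hs.1
  have ht0 := ht.1
  have h1 := (R.S_or (mul_ne_zero hx0 hs0) (R.mulH hs.2.1 hx)).resolve_left h1
  have h2 := (R.S_or (mul_ne_zero (inv_ne_zero hx0) ht0) (R.mulH ht.2.1 hx.inv)).resolve_left h2
  have e : (x * s)⁻¹ * (x⁻¹ * t)⁻¹ = (s * t)⁻¹ := by field_simp
  by_cases h : mm H (s * t)
  · have h3 := (R.prodP h1 h2 (by rw [e]; exact h.inv)).2 s hs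
    rw [e] at h3
    refine R.S_inv_not ht ?_
    convert h3 using 1
    field_simp
  · have h3 := R.prodS h1 h2 (by rw [e]; exact fun h' => h (R.mem_inv_iff.mp h'))
    rw [e] at h3
    exact R.S_inv_not (R.prodS hs ht h) h3

theorem S_div (R : Rig ℓ T H) {s : F} (hs : Sm T H s) : Sm T H (s / (1 - s)) := by
  have h1 := hs.2.2
  have h0 := h1.ne
  have := R.mulH hs.2.1 (h1.inv.mono R.le)
  have h2 : Sm T H (-(s / (1 - s))) := by
    refine ⟨neg_ne_zero.mpr (div_ne_zero hs.1 h0), ?_, ?_⟩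
    · intro h
      have h := R.negH h
      rw [neg_neg, div_eq_inv_mul] at h
      exact this h
    · convert h1.inv using 1
      field_simp
      ring
  simpa using R.S_neg h2

/-- key for additivity -/
theorem add_aux (R : Rig ℓ T H) {x s : F} (hs : Sm T H s) (hx : mm T (1 - (-x) * (s / (1 - s))))
    (h : mm H (1 - x)) : Sm T H ((1 - x) * s) := by
  refine ⟨mul_ne_zero h.ne hs.1, R.mulH hs.2.1 h, ?_⟩
  have h1 := hs.2.2.ne
  convert hs.2.2.mul hx using 1
  field_simp
  ring

theorem S_sub (R : Rig ℓ T H) {x : F} (hx : Sm T H x) : Pm T H (1 - x) := by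
  refine ⟨hx.2.2.mono R.le, fun s hs => R.add_aux hs ?_ (hx.2.2.mono R.le)⟩
  exact R.prodT (R.S_neg hx) (R.S_div hs)

theorem P_sub (R : Rig ℓ T H) {x : F} (hx : Pm T H x) : 1 - x = 0 ∨ Sm T H (1 - x) ∨ Pm T H (1 - x) := by
  by_cases h0 : 1 - x = 0
  · exact Or.inl h0
  right
  by_cases h : mm H (1 - x)
  · right
    exact ⟨h, fun s hs => R.add_aux hs ((R.P_neg hx).2 _ (R.S_div hs)).2.2 h⟩
  · left
    refine ⟨h0, h, ?_⟩
    rcases R.step1 h0 h with h' | h'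
    · exact h'
    · exfalso
      apply h
      have := hx.1.div (h'.mono R.le)
      have hx0 := hx.1.ne
      convert this using 1
      rw [sub_sub_cancel]
      field_simp

/-- membership in the valuation ring -/
def Om {F : Type*} [Field F] (T H : Subgroup Fˣ) (x : F) : Prop :=
  x = 0 ∨ Sm T H x ∨ Pm T H x

theorem Om_mul (R : Rig ℓ T H) {x y : F} (hx : Om T H x) (hy : Om T H y) : Om T H (x * y) := by
  rcases hx with rfl | hx | hx
  · left; simp
  · rcases hy with rfl | hy | hy
    · left; simp
    · right
      by_cases h : mm H (x * y)
      · exact Or.inr (R.prodP hx hy h)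
      · exact Or.inl (R.prodS hx hy h)
    · right; left; rw [mul_comm]; exact hy.2 _ hx
  · rcases hy with rfl | hy | hy
    · left; simp
    · exact Or.inr (Or.inl (hx.2 _ hy))
    · exact Or.inr (Or.inr (R.P_mul hx hy))

theorem Om_neg (R : Rig ℓ T H) {x : F} (hx : Om T H x) : Om T H (-x) := by
  rcases hx with rfl | hx | hx
  · left; simp
  · exact Or.inr (Or.inl (R.S_neg hx))
  · exact Or.inr (Or.inr (R.P_neg hx))

theorem Om_sub (R : Rig ℓ T H) {x : F} (hx : Om T H x) : Om T H (1 - x) := by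
  rcases hx with rfl | hx | hx
  · right; right; rw [sub_zero]; exact R.P_one
  · exact Or.inr (Or.inr (R.S_sub hx))
  · exact R.P_sub hx

theorem Om_or (R : Rig ℓ T H) (x : F) : Om T H x ∨ Om T H x⁻¹ := by
  by_cases h0 : x = 0
  · exact Or.inl (Or.inl h0)
  by_cases h : mm H x
  · exact (R.P_or h).imp (fun h => Or.inr (Or.inr h)) (fun h => Or.inr (Or.inr h))
  · exact (R.S_or h0 h).imp (fun h => Or.inr (Or.inl h)) (fun h => Or.inr (Or.inl h))

theorem Om_add (R : Rig ℓ T H) {x y : F} (hx : Om T H x) (hy : Om T H y) : Om T H (x + y) := by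
  have main : ∀ {x y : F}, Om T H x → Om T H (y / x) → x ≠ 0 → Om T H (x + y) := by
    intro x y hx h hx0
    have := R.Om_mul hx (R.Om_sub (R.Om_neg h))
    convert this using 1
    field_simp
    ring
  by_cases hx0 : x = 0
  · simpa [hx0] using hy
  by_cases hy0 : y = 0
  · simpa [hy0] using hx
  rcases R.Om_or (y / x) with h | h
  · exact main hx h hx0
  · rw [inv_div] at h
    rw [add_comm]
    exact main hy h hy0

/-- the valuation ring -/
def ring (R : Rig ℓ T H) : ValuationSubring F where
  carrier := {x | Om T H x}
  mul_mem' := R.Om_mul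
  one_mem' := Or.inr (Or.inr R.P_one)
  add_mem' := R.Om_add
  zero_mem' := Or.inl rfl
  neg_mem' := R.Om_neg
  mem_or_inv_mem' := R.Om_or

theorem mem_ring (R : Rig ℓ T H) {x : F} : x ∈ R.ring ↔ Om T H x := Iff.rfl

/-- `1 - m ⊆ T` -/
theorem max_T (R : Rig ℓ T H) {x : F} (hx : R.ring.valuation x < 1) : mm T (1 - x) := by
  by_cases hx0 : x = 0
  · rw [hx0, sub_zero]; exact mm_one
  have hxO : Om T H x := R.mem_ring.mp ((R.ring.valuation_le_one_iff x).mp hx.le)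
  have hxi : ¬ Om T H x⁻¹ := by
    intro h
    have := (R.ring.valuation_le_one_iff _).mpr (R.mem_ring.mpr h)
    rw [map_inv₀] at this
    have h2 := (inv_le_one₀ (by simpa [zero_lt_iff] using hx0)).mp this
    exact absurd hx (not_lt.mpr h2)
  rcases hxO with h | h | h
  · exact absurd h hx0
  · exact h.2.2
  · have : ∃ s, Sm T H s ∧ ¬ Sm T H (x⁻¹ * s) := by
      by_contra! hc
      exact hxi (Or.inr (Or.inr ⟨h.1.inv, hc⟩))
    obtain ⟨s, hs, h2⟩ := this
    have h2 := (R.S_or (mul_ne_zero (inv_ne_zero hx0) hs.1) (R.mulH hs.2.1 h.1.inv)).resolve_left h2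
    have := R.prodT hs h2
    have hs0 := hs.1
    convert this using 2
    field_simp

/-- units lie in `H` -/
theorem unit_H (R : Rig ℓ T H) {u : Fˣ} (hu : u ∈ R.ring.unitGroup) : u ∈ H := by
  by_contra h
  have hv := (R.ring.mem_unitGroup_iff u).mp hu
  have key : ∀ w : F, R.ring.valuation w = 1 → ¬ Sm T H w := by
    intro w hw hS
    have : Om T H w⁻¹ := R.mem_ring.mp ((R.ring.valuation_le_one_iff _).mp (by rw [map_inv₀, hw, inv_one]))
    rcases this with h' | h' | h'
    · exact hS.1 (inv_eq_zero.mp h')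
    · exact R.S_inv_not hS h'
    · exact hS.2.1 (R.mem_inv_iff.mp h'.1)
  rcases R.S_or u.ne_zero (fun h' => h (mm_coe.mp h')) with h1 | h1
  · exact key _ hv h1
  · exact key _ (by rw [map_inv₀, hv, inv_one]) h1

/-- elements of `H` outside the valuation ring have small witnesses -/
theorem wit (R : Rig ℓ T H) {x : F} (hx : mm H x) (hxO : 1 < R.ring.valuation x) :
    ∃ s : F, s ≠ 0 ∧ ¬ mm H s ∧ R.ring.valuation s ≤ 1 ∧ 1 ≤ R.ring.valuation (x * s) := by
  have h1 : ¬ Om T H x := fun h =>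
    absurd hxO (not_lt.mpr ((R.ring.valuation_le_one_iff x).mpr (R.mem_ring.mpr h)))
  have : ∃ s, Sm T H s ∧ ¬ Sm T H (x * s) := by
    by_contra! hc
    exact h1 (Or.inr (Or.inr ⟨hx, hc⟩))
  obtain ⟨s, hs, h2⟩ := this
  have hne := mul_ne_zero hx.ne hs.1
  have h2 := (R.S_or hne (R.mulH hs.2.1 hx)).resolve_left h2
  refine ⟨s, hs.1, hs.2.1, (R.ring.valuation_le_one_iff s).mpr (Or.inr (Or.inl hs)), ?_⟩
  have h3 := (R.ring.valuation_le_one_iff _).mpr (R.mem_ring.mpr (Or.inr (Or.inl h2)))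
  rw [map_inv₀] at h3
  exact (inv_le_one₀ (by simpa [zero_lt_iff] using hne)).mp h3

end Rig

section val
variable {K : Type*} [Field K] (ℓ : ℕ) (O : ValuationSubring K)

/-- units times `ℓ`-th powers -/
noncomputable def Vg : Subgroup Kˣ := O.unitGroup ⊔ powSub K ℓ

variable {ℓ O}

theorem mem_Vg {u : Kˣ} : u ∈ Vg ℓ O ↔ ∃ z : Kˣ, O.valuation (u : K) = O.valuation (z : K) ^ ℓ := by
  constructor
  · intro h
    obtain ⟨a, ha, b, ⟨z, rfl⟩, rfl⟩ := Subgroup.mem_sup.mp h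
    refine ⟨z, ?_⟩
    have := (O.mem_unitGroup_iff a).mp ha
    simp [this]
  · rintro ⟨z, hz⟩
    have : u = (u * (z ^ ℓ)⁻¹) * z ^ ℓ := by simp
    rw [this]
    refine Subgroup.mul_mem_sup ?_ ⟨z, rfl⟩
    rw [O.mem_unitGroup_iff]
    have hz0 : O.valuation (z : K) ^ ℓ ≠ 0 := pow_ne_zero _ (by simp)
    simp [hz, mul_inv_cancel₀ hz0]

theorem mmV_congr {x y : K} (hx : x ≠ 0) (hxy : O.valuation x = O.valuation y)
    (h : mm (Vg ℓ O) y) : mm (Vg ℓ O) x := by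
  obtain ⟨u, hu, rfl⟩ := h
  obtain ⟨z, hz⟩ := mem_Vg.mp hu
  exact ⟨Units.mk0 x hx, mem_Vg.mpr ⟨z, by simpa [hxy] using hz⟩, rfl⟩

theorem mmV_one {x : K} (hx : O.valuation x = 1) : mm (Vg ℓ O) x :=
  mmV_congr (y := 1) (by rintro rfl; simp at hx) (by simpa using hx) mm_one

theorem hpV (x : Kˣ) : x ^ ℓ ∈ Vg ℓ O := Subgroup.mem_sup_right ⟨x, rfl⟩

theorem hpU (x : Kˣ) : x ^ ℓ ∈ U1v ℓ O := Subgroup.mem_sup_right ⟨x, rfl⟩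

theorem hnU : (-1 : Kˣ) ∈ U1v ℓ O :=
  Subgroup.mem_sup_left (Subgroup.mem_sup_right (Subgroup.subset_closure rfl))

theorem prin_le : O.principalUnitGroup ≤ U1v ℓ O := fun u hu =>
  Subgroup.mem_sup_left (Subgroup.mem_sup_left (Subgroup.subset_closure
    ⟨(u : K) - 1, (O.mem_principalUnitGroup_iff u).mp hu, by ring⟩))

theorem v_one_sub {x : K} (hx : O.valuation x < 1) : O.valuation (1 - x) = 1 := by
  rw [sub_eq_add_neg]
  exact O.valuation.map_one_add_of_lt (by rwa [Valuation.map_neg])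

theorem mmU {x : K} (hx : O.valuation x < 1) : mm (U1v ℓ O) (1 - x) := by
  have h := v_one_sub hx
  have h0 : 1 - x ≠ 0 := by intro h'; simp [h'] at h
  refine ⟨Units.mk0 _ h0, prin_le ?_, rfl⟩
  rw [O.mem_principalUnitGroup_iff]
  simpa using hx

theorem U1_le {M : Subgroup Kˣ} (hp : ∀ x : Kˣ, x ^ ℓ ∈ M) (hn : (-1 : Kˣ) ∈ M)
    (h : ∀ x : K, O.valuation x < 1 → mm M (1 - x)) : U1v ℓ O ≤ M := by
  refine sup_le (sup_le ?_ ?_) ?_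
  · rw [Subgroup.closure_le]
    rintro u ⟨a, ha, hu⟩
    have := h (-a) (by rwa [Valuation.map_neg])
    rw [sub_neg_eq_add, ← hu] at this
    exact mm_coe.mp this
  · rw [Subgroup.closure_le]; rintro _ rfl; exact hn
  · rintro _ ⟨x, rfl⟩; exact hp x

theorem U1_le_V : U1v ℓ O ≤ Vg ℓ O :=
  U1_le hpV (mm_coe.mp (mmV_one (by simp))) (fun _ hx => mmV_one (v_one_sub hx))

theorem v_trich {x : K} (hx : x ≠ 0) (h : O.valuation x ≠ 1) :
    O.valuation x < 1 ∨ O.valuation x⁻¹ < 1 := by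
  rcases lt_or_gt_of_ne h with h | h
  · exact Or.inl h
  · right; rw [map_inv₀]; exact inv_lt_one_of_one_lt₀ h

theorem ind_unit (hℓ : ℓ.Prime) {x : K} (h : Ind ℓ (U1v ℓ O) x (1 - x)) : O.valuation x = 1 := by
  by_contra hv
  have hx0 := h.1
  rcases v_trich h.1 hv with h1 | h1
  · exact h.symm.not_left hℓ (mmU h1)
  · have h2 := mmU (ℓ := ℓ) h1
    have := (h.2.2 (-1) 1 (by
      convert h2.neg hnU using 1
      rw [zpow_neg, zpow_one, zpow_one]
      field_simp
      ring)).2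
    exact not_dvd_one hℓ this

theorem HU_le (hℓ : ℓ.Prime) : Hbold (U1v ℓ O) ≤ Vg ℓ O :=
  Hbold_le hℓ hpU U1_le_V (fun _ hx => mmV_one (ind_unit hℓ hx))

theorem phi_neg (h : (-1 : Kˣ) ∈ O.unitGroup) : O.unitGroupToResidueFieldUnits ⟨-1, h⟩ = -1 := by
  ext
  rw [O.coe_unitGroupToResidueFieldUnits_apply]
  have : ((O.unitGroupMulEquiv ⟨-1, h⟩ : Oˣ) : O) = -1 := by
    apply Subtype.ext
    simp
  rw [this, map_neg, map_one]
  simp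
  rfl

theorem hn1 : (-1 : Kˣ) ∈ O.unitGroup := by rw [O.mem_unitGroup_iff]; simp

theorem mem_small {F : Type*} [Field F] {ℓ : ℕ} {u : Fˣ} :
    u ∈ smallSub F ℓ ↔ ∃ (z : Fˣ) (n : ℤ), u = z ^ ℓ * (-1) ^ n := by
  constructor
  · intro h
    obtain ⟨a, ⟨z, rfl⟩, b, hb, rfl⟩ := Subgroup.mem_sup.mp h
    obtain ⟨n, rfl⟩ := Subgroup.mem_closure_singleton.mp hb
    exact ⟨z, n, rfl⟩
  · rintro ⟨z, n, rfl⟩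
    have h1 : z ^ ℓ ∈ powSub F ℓ := ⟨z, rfl⟩
    have h2 : (-1 : Fˣ) ∈ Subgroup.closure {(-1 : Fˣ)} := Subgroup.subset_closure (Set.mem_singleton _)
    exact Subgroup.mul_mem_sup h1 (Subgroup.zpow_mem _ h2 n)

theorem unit_iff (hℓ : ℓ.Prime) (u : O.unitGroup) : (u : Kˣ) ∈ U1v ℓ O ↔
    O.unitGroupToResidueFieldUnits u ∈ smallSub (IsLocalRing.ResidueField O) ℓ := by
  have hker : ∀ p : O.unitGroup, (p : Kˣ) ∈ O.principalUnitGroup ↔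
      O.unitGroupToResidueFieldUnits p = 1 := by
    intro p
    rw [← MonoidHom.mem_ker, O.ker_unitGroupToResidueFieldUnits]; rfl
  constructor
  · intro h
    obtain ⟨a, ha, b, ⟨z, rfl⟩, e⟩ := Subgroup.mem_sup.mp h
    obtain ⟨p, hp, q, hq, rfl⟩ := Subgroup.mem_sup.mp ha
    obtain ⟨n, rfl⟩ := Subgroup.mem_closure_singleton.mp hq
    have hp : p ∈ O.principalUnitGroup := by
      refine (Subgroup.closure_le _).mpr ?_ hp
      rintro w ⟨a, ha, hw⟩
      change O.valuation ((w : K) - 1) < 1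
      rw [hw]; simpa using ha
    have hpu := O.principal_units_le_units hp
    have hz : z ∈ O.unitGroup := by
      have hzl : z ^ ℓ ∈ O.unitGroup := by
        have : z ^ ℓ = (p * (-1) ^ n)⁻¹ * u := by
          rw [← e]; exact (inv_mul_cancel_left _ _).symm
        rw [this]
        exact mul_mem (inv_mem (mul_mem hpu (zpow_mem hn1 n))) u.2
      rw [O.mem_unitGroup_iff] at hzl ⊢
      rw [Units.val_pow_eq_pow_val, map_pow] at hzl
      exact (pow_eq_one_iff_of_nonneg zero_le' hℓ.ne_zero).mp hzl
    have e2 : u = ⟨p, hpu⟩ * ⟨-1, hn1⟩ ^ n * ⟨z, hz⟩ ^ ℓ := by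
      apply Subtype.ext
      rw [← e]
      simp
    rw [mem_small]
    refine ⟨O.unitGroupToResidueFieldUnits ⟨z, hz⟩, n, ?_⟩
    rw [e2, map_mul, map_mul, map_pow, map_zpow, phi_neg, (hker ⟨p, hpu⟩).mp hp, one_mul, mul_comm]
  · intro h
    obtain ⟨z, n, e⟩ := mem_small.mp h
    obtain ⟨z, rfl⟩ := O.surjective_unitGroupToResidueFieldUnits z
    have h1 : O.unitGroupToResidueFieldUnits (u * (z ^ ℓ * ⟨-1, hn1⟩ ^ n)⁻¹) = 1 := by
      rw [map_mul, map_inv, e, map_mul, map_pow, map_zpow, phi_neg, mul_inv_cancel]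
    have h2 := prin_le (ℓ := ℓ) ((hker _).mpr h1)
    have e2 : (u : Kˣ) = ((u * (z ^ ℓ * ⟨-1, hn1⟩ ^ n)⁻¹ : O.unitGroup) : Kˣ) *
        ((z : Kˣ) ^ ℓ * (-1) ^ n) := by
      push_cast
      exact (inv_mul_cancel_right _ _).symm
    rw [e2]
    exact mul_mem h2 (mul_mem (hpU _) (zpow_mem hnU n))

theorem ind_units {F : Type*} [Field F] {T : Subgroup Fˣ} {ℓ : ℕ} {x y : Fˣ} :
    Ind ℓ T (x : F) (y : F) ↔ ∀ i j : ℤ, x ^ i * y ^ j ∈ T → (ℓ : ℤ) ∣ i ∧ (ℓ : ℤ) ∣ j := by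
  have : ∀ i j : ℤ, mm T ((x : F) ^ i * (y : F) ^ j) ↔ x ^ i * y ^ j ∈ T := by
    intro i j
    rw [← mm_coe]; simp
  simp only [Ind, this]
  simp

theorem ind_iff (hℓ : ℓ.Prime) (x y : O.unitGroup) :
    Ind ℓ (U1v ℓ O) ((x : Kˣ) : K) ((y : Kˣ) : K) ↔
    Ind ℓ (smallSub (IsLocalRing.ResidueField O) ℓ)
      (O.unitGroupToResidueFieldUnits x : IsLocalRing.ResidueField O)
      (O.unitGroupToResidueFieldUnits y : IsLocalRing.ResidueField O) := by
  rw [ind_units, ind_units]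
  refine forall_congr' fun i => forall_congr' fun j => ?_
  rw [← map_zpow, ← map_zpow, ← map_mul, ← unit_iff hℓ]
  rfl

theorem phi_sub {x y : O.unitGroup} (h : ((y : Kˣ) : K) = 1 - ((x : Kˣ) : K)) :
    (O.unitGroupToResidueFieldUnits y : IsLocalRing.ResidueField O) =
      1 - (O.unitGroupToResidueFieldUnits x : IsLocalRing.ResidueField O) := by
  rw [O.coe_unitGroupToResidueFieldUnits_apply, O.coe_unitGroupToResidueFieldUnits_apply]
  have : ((O.unitGroupMulEquiv y : Oˣ) : O) = 1 - ((O.unitGroupMulEquiv x : Oˣ) : O) := by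
    apply Subtype.ext
    simpa using h
  rw [this, map_sub, map_one]
  rfl

theorem phi_lift {x : O.unitGroup}
    (h : 1 - (O.unitGroupToResidueFieldUnits x : IsLocalRing.ResidueField O) ≠ 0) :
    ∃ y : O.unitGroup, ((y : Kˣ) : K) = 1 - ((x : Kˣ) : K) := by
  set w : O := 1 - ((O.unitGroupMulEquiv x : Oˣ) : O) with hw
  have h1 : IsLocalRing.residue O w ≠ 0 := by
    intro h'
    apply h
    rw [hw, map_sub, map_one] at h'
    exact h'
  have h2 : IsUnit w := (IsLocalRing.residue_ne_zero_iff_isUnit w).mp h1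
  have h3 := (O.valuation_eq_one_iff w).mp h2
  have h4 : (w : K) = 1 - ((x : Kˣ) : K) := by simp [hw]
  have h5 : (w : K) ≠ 0 := by intro h'; simp [h'] at h3
  exact ⟨⟨Units.mk0 (w : K) h5, (O.mem_unitGroup_iff _).mpr (by simpa using h3)⟩, by simpa using h4⟩

theorem hp_small {F : Type*} [Field F] {ℓ : ℕ} (x : Fˣ) : x ^ ℓ ∈ smallSub F ℓ :=
  Subgroup.mem_sup_left ⟨x, rfl⟩

theorem HU_ge (hℓ : ℓ.Prime) (h : Hbold (smallSub (IsLocalRing.ResidueField O) ℓ) = ⊤) :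
    O.unitGroup ≤ Hbold (U1v ℓ O) := by
  set φ := O.unitGroupToResidueFieldUnits with hφ
  have h1 : Hbold (smallSub (IsLocalRing.ResidueField O) ℓ) ≤
      ((Hbold (U1v ℓ O)).comap O.unitGroup.subtype).map φ := by
    apply Hbold_le hℓ hp_small
    · intro w hw
      obtain ⟨w, rfl⟩ := O.surjective_unitGroupToResidueFieldUnits w
      exact ⟨w, le_Hbold ((unit_iff hℓ w).mpr hw), rfl⟩
    · intro x hx
      obtain ⟨u, hu⟩ := O.surjective_unitGroupToResidueFieldUnits (Units.mk0 x hx.1)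
      have hux : (φ u : IsLocalRing.ResidueField O) = x := by rw [hφ, hu]; rfl
      rw [← hux] at hx ⊢
      obtain ⟨y, hy⟩ := phi_lift hx.2.1
      rw [← phi_sub hy] at hx
      have h2 := (ind_iff hℓ u y).mpr hx
      rw [hy] at h2
      exact ⟨φ u, ⟨u, mm_coe.mp (Hbold_ind hℓ hpU h2), rfl⟩, rfl⟩
  intro u hu
  have h2 : φ ⟨u, hu⟩ ∈ ((Hbold (U1v ℓ O)).comap O.unitGroup.subtype).map φ := by
    apply h1; rw [h]; trivial
  obtain ⟨w, hw, e⟩ := h2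
  have h3 : (⟨u, hu⟩ * w⁻¹ : O.unitGroup).1 ∈ U1v ℓ O := by
    rw [unit_iff hℓ, map_mul, map_inv, ← hφ, ← e, mul_inv_cancel]
    exact one_mem _
  have h4 := mul_mem (le_Hbold h3) hw
  simpa using h4

theorem small_top (hℓ : ℓ.Prime) (h : O.unitGroup ≤ Hbold (U1v ℓ O)) :
    Hbold (smallSub (IsLocalRing.ResidueField O) ℓ) = ⊤ := by
  set φ := O.unitGroupToResidueFieldUnits with hφ
  set N := Hbold (smallSub (IsLocalRing.ResidueField O) ℓ) with hN
  have h1 : Hbold (U1v ℓ O) ≤ U1v ℓ O ⊔ (N.comap φ).map O.unitGroup.subtype := by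
    apply Hbold_le hℓ hpU le_sup_left
    intro x hx
    have hv := ind_unit hℓ hx
    have hv' := ind_unit (x := 1 - x) hℓ (by simpa using hx.symm)
    let u : O.unitGroup := ⟨Units.mk0 x hx.1, (O.mem_unitGroup_iff _).mpr hv⟩
    let y : O.unitGroup := ⟨Units.mk0 (1 - x) hx.2.1, (O.mem_unitGroup_iff _).mpr hv'⟩
    have h2 := (ind_iff hℓ u y).mp hx
    rw [phi_sub (x := u) (y := y) rfl] at h2
    have h3 := mm_coe.mp (Hbold_ind hℓ hp_small h2)
    exact ⟨Units.mk0 x hx.1, Subgroup.mem_sup_right ⟨u, h3, rfl⟩, rfl⟩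
  rw [eq_top_iff]
  intro w _
  obtain ⟨w, rfl⟩ := O.surjective_unitGroupToResidueFieldUnits w
  obtain ⟨t, ht, s, ⟨s, hs, rfl⟩, e⟩ := Subgroup.mem_sup.mp (h1 (h w.2))
  have h2 : ((w * s⁻¹ : O.unitGroup) : Kˣ) ∈ U1v ℓ O := by
    have : ((w * s⁻¹ : O.unitGroup) : Kˣ) = t := by
      push_cast
      rw [← e]; simp
    rwa [this]
  have h3 := mul_mem (le_Hbold ((unit_iff hℓ _).mp h2)) hs
  rwa [← hφ, ← map_mul, inv_mul_cancel_right] at h3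

theorem not_ind_of_cyclic {F : Type*} [Field F] {T : Subgroup Fˣ} (hℓ : ℓ.Prime)
    (hp : ∀ x : Fˣ, x ^ ℓ ∈ T) (hc : IsCyclic (Fˣ ⧸ T)) (x y : F) : ¬ Ind ℓ T x y := by
  intro h
  have hx := h.not_left hℓ
  obtain ⟨x, rfl⟩ : ∃ u : Fˣ, (u : F) = x := ⟨Units.mk0 x h.1, rfl⟩
  obtain ⟨y, rfl⟩ : ∃ u : Fˣ, (u : F) = y := ⟨Units.mk0 y h.2.1, rfl⟩
  obtain ⟨c, hc⟩ := hc
  obtain ⟨c, rfl⟩ := QuotientGroup.mk_surjective c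
  obtain ⟨m, hm⟩ := Subgroup.mem_zpowers_iff.mp (hc (QuotientGroup.mk x))
  obtain ⟨n, hn⟩ := Subgroup.mem_zpowers_iff.mp (hc (QuotientGroup.mk y))
  have hm : (c ^ m)⁻¹ * x ∈ T := by
    rw [← QuotientGroup.eq, QuotientGroup.mk_zpow]; exact hm
  have hn : (c ^ n)⁻¹ * y ∈ T := by
    rw [← QuotientGroup.eq, QuotientGroup.mk_zpow]; exact hn
  have h1 : x ^ n * y ^ (-m) ∈ T := by
    have := mul_mem (zpow_mem hm n) (zpow_mem hn (-m))
    convert this using 1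
    rw [mul_zpow, mul_zpow, inv_zpow', inv_zpow', ← zpow_mul, ← zpow_mul,
      mul_mul_mul_comm, ← zpow_add, show m * -n + n * - -m = 0 by ring, zpow_zero, one_mul]
  have h2 := (ind_units.mp h _ _ h1).2
  obtain ⟨k, rfl⟩ := dvd_neg.mp h2
  apply hx
  rw [mm_coe]
  have h3 : c ^ ((ℓ : ℤ) * k) ∈ T := by
    rw [zpow_mul, zpow_natCast]
    exact zpow_mem (hp c) k
  have := mul_mem h3 hm
  rwa [mul_inv_cancel_left] at this

/-- existence of elements of small non-divisible value -/
theorem dense (hℓ : ℓ.Prime) (hD : NoLDivConvex ℓ O) {x : Kˣ} (hx : 1 < O.valuation (x : K))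
    (hxV : x ∈ Vg ℓ O) :
    ∃ y : Kˣ, y ∉ Vg ℓ O ∧ 1 < O.valuation (y : K) ∧ O.valuation (y : K) < O.valuation (x : K) := by
  by_contra! hc
  have step : ∀ n : ℕ, ∀ d : Kˣ, 1 ≤ O.valuation (d : K) →
      O.valuation (d : K) ≤ O.valuation (x : K) ^ n → d ∈ Vg ℓ O := by
    intro n
    induction n with
    | zero =>
      intro d h1 h2
      rw [pow_zero] at h2
      exact mm_coe.mp (mmV_one (le_antisymm h2 h1))
    | succ n ih =>
      intro d h1 h2
      by_cases hd : O.valuation (d : K) < O.valuation (x : K)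
      · by_contra hdV
        rcases h1.eq_or_lt with h1 | h1
        · exact hdV (mm_coe.mp (mmV_one h1.symm))
        · exact absurd hd (not_lt.mpr (hc d hdV h1))
      · have hx0 : 0 < O.valuation (x : K) := zero_lt_one.trans hx
        have : d * x⁻¹ ∈ Vg ℓ O := by
          apply ih
          · rw [Units.val_mul, Units.val_inv_eq_inv_val, map_mul, map_inv₀, ← div_eq_mul_inv,
              one_le_div₀ hx0]
            exact not_lt.mp hd
          · rw [Units.val_mul, Units.val_inv_eq_inv_val, map_mul, map_inv₀, ← div_eq_mul_inv,
              div_le_iff₀ hx0, ← pow_succ]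
            exact h2
        have := mul_mem this hxV
        simpa using this
  let D : Subgroup Kˣ :=
    { carrier := {d | ∃ n : ℕ, O.valuation (d : K) ≤ O.valuation (x : K) ^ n ∧
        O.valuation ((d⁻¹ : Kˣ) : K) ≤ O.valuation (x : K) ^ n}
      one_mem' := ⟨0, by simp⟩
      mul_mem' := by
        rintro a b ⟨n, h1, h2⟩ ⟨m, h3, h4⟩
        refine ⟨n + m, ?_, ?_⟩
        · rw [Units.val_mul, map_mul, pow_add]; exact mul_le_mul' h1 h3
        · rw [mul_inv, Units.val_mul, map_mul, pow_add]; exact mul_le_mul' h2 h4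
      inv_mem' := by
        rintro a ⟨n, h1, h2⟩
        exact ⟨n, h2, by simpa using h1⟩ }
  have memD : ∀ d : Kˣ, d ∈ D ↔ ∃ n : ℕ, O.valuation (d : K) ≤ O.valuation (x : K) ^ n ∧
        O.valuation ((d⁻¹ : Kˣ) : K) ≤ O.valuation (x : K) ^ n := fun d => Iff.rfl
  have h1 := hD D ?_ ?_ ?_
  · have hxD : x ∈ D := by
      rw [memD]
      refine ⟨1, by simp, ?_⟩
      rw [pow_one, Units.val_inv_eq_inv_val, map_inv₀]
      exact (inv_le_one_of_one_le₀ hx.le).trans hx.le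
    rw [h1, O.mem_unitGroup_iff] at hxD
    exact hx.ne' hxD
  · intro u hu
    rw [O.mem_unitGroup_iff] at hu
    rw [memD]
    exact ⟨0, by simp [hu]⟩
  · intro d hd y hy1 hy2
    rw [memD] at hd ⊢
    obtain ⟨n, h1, h2⟩ := hd
    refine ⟨n, hy2.trans h1, ?_⟩
    rw [Units.val_inv_eq_inv_val, map_inv₀]
    exact (inv_le_one_of_one_le₀ hy1).trans (one_le_pow₀ hx.le)
  · intro d hd
    rw [memD] at hd
    obtain ⟨n, h1, h2⟩ := hd
    have hdV : d ∈ Vg ℓ O := by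
      rcases le_total 1 (O.valuation (d : K)) with h | h
      · exact step n d h h1
      · rw [← inv_mem_iff]
        refine step n _ ?_ h2
        rw [Units.val_inv_eq_inv_val, map_inv₀]
        exact (one_le_inv₀ (by simp [zero_lt_iff])).mpr h
    obtain ⟨z, hz⟩ := mem_Vg.mp hdV
    refine ⟨z, ?_, ?_⟩
    · have aux : ∀ w : Kˣ, O.valuation (w : K) ^ ℓ ≤ O.valuation (x : K) ^ n →
          O.valuation (w : K) ≤ O.valuation (x : K) ^ n := by
        intro w hw
        rcases le_total 1 (O.valuation (w : K)) with h | h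
        · exact (le_self_pow₀ h hℓ.ne_zero).trans hw
        · exact h.trans (one_le_pow₀ hx.le)
      rw [memD]
      refine ⟨n, aux z (hz ▸ h1), aux _ ?_⟩
      rw [Units.val_inv_eq_inv_val, map_inv₀, inv_pow, ← hz]
      simpa using h2
    · rw [O.mem_unitGroup_iff, div_eq_mul_inv]
      have hz0 : O.valuation (z : K) ^ ℓ ≠ 0 := pow_ne_zero _ (by simp)
      simp [hz, mul_inv_cancel₀ hz0]

theorem VK_eq (hℓ : ℓ.Prime) (hO : O ∈ VK K ℓ) : Hbold (U1v ℓ O) = Vg ℓ O := by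
  refine le_antisymm (HU_le hℓ) (sup_le (HU_ge hℓ hO.2.2) ?_)
  rintro _ ⟨x, rfl⟩
  exact le_Hbold (hpU x)

theorem mapsTo (hℓ : ℓ.Prime) (hO : O ∈ VK K ℓ) : U1v ℓ O ∈ TK K ℓ := by
  refine ⟨hpU, hnU, ?_, ?_⟩
  · intro h
    apply hO.2.1
    have h1 : smallSub (IsLocalRing.ResidueField O) ℓ = ⊤ := by
      rw [eq_top_iff]
      intro w _
      obtain ⟨w, rfl⟩ := O.surjective_unitGroupToResidueFieldUnits w
      rw [← unit_iff hℓ, h]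
      exact HU_ge hℓ hO.2.2 w.2
    have : Subsingleton ((IsLocalRing.ResidueField O)ˣ ⧸
        smallSub (IsLocalRing.ResidueField O) ℓ) := by
      rw [h1]; exact QuotientGroup.subsingleton_quotient_top
    exact isCyclic_of_subsingleton
  · intro T' hp hn hle hne hH
    rw [VK_eq hℓ hO] at hH
    have hTV : T' ≤ Vg ℓ O := le_Hbold.trans hH
    apply hne
    refine le_antisymm hle (U1_le hp hn ?_)
    have core : ∀ z : K, z ≠ 0 → ¬ mm (Vg ℓ O) z → O.valuation z < 1 → mm T' (1 - z) := by
      intro z hz0 hzV hz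
      have h1 := v_one_sub hz
      have h10 : 1 - z ≠ 0 := by intro h'; simp [h'] at h1
      obtain ⟨k, hk⟩ := dep_pow hℓ hp hz0 h10 (fun h => hzV (h.mono hTV))
        (fun h => hzV ((Hbold_ind hℓ hp h).mono hH))
      by_cases hkℓ : (ℓ : ℤ) ∣ k
      · have := hk.mul (mm_zpow_dvd hp hz0 hkℓ)
        rwa [div_mul_cancel₀ _ (zpow_ne_zero _ hz0)] at this
      · exfalso
        apply hzV
        apply mm_of_zpow hℓ hpV hz0 hkℓ
        have := (mmV_one (ℓ := ℓ) h1).div (hk.mono hTV)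
        rwa [div_div_cancel₀ h10] at this
    intro z hz
    by_cases hz0 : z = 0
    · rw [hz0, sub_zero]; exact mm_one
    by_cases hzV : mm (Vg ℓ O) z
    swap
    · exact core z hz0 hzV hz
    have hvz : 0 < O.valuation z := by simpa [zero_lt_iff] using hz0
    obtain ⟨y, hyV, hy1, hy2⟩ := dense hℓ hO.1 (x := Units.mk0 z⁻¹ (inv_ne_zero hz0))
      (by rw [Units.val_mk0, map_inv₀]; exact (one_lt_inv₀ hvz).mpr hz)
      (mm_coe.mp hzV.inv)
    rw [Units.val_mk0, map_inv₀] at hy2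
    obtain ⟨w, hw⟩ : ∃ w : K, w = (y : K)⁻¹ := ⟨_, rfl⟩
    have hw0 : w ≠ 0 := by rw [hw]; simp
    have hwV : ¬ mm (Vg ℓ O) w := by
      intro h
      apply hyV
      rw [hw] at h
      have := h.inv
      rw [inv_inv] at this
      exact mm_coe.mp this
    have hw1 : O.valuation w < 1 := by
      rw [hw, map_inv₀]; exact inv_lt_one_of_one_lt₀ hy1
    have hzw : O.valuation z < O.valuation w := by
      rw [hw, map_inv₀]
      exact (lt_inv_comm₀ (zero_lt_one.trans hy1) hvz).mp hy2
    have h1w := v_one_sub hw1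
    have h1w0 : 1 - w ≠ 0 := by intro h'; simp [h'] at h1w
    have hv : O.valuation ((z - w) / (1 - w)) = O.valuation w := by
      rw [map_div₀, h1w, div_one]
      exact Valuation.map_sub_eq_of_lt_right _ hzw
    have hq0 : (z - w) / (1 - w) ≠ 0 := by
      intro h'
      rw [h', map_zero] at hv
      exact hw0 ((map_eq_zero _).mp hv.symm)
    have h2 := core _ hq0 (fun h => hwV (mmV_congr hw0 hv.symm h)) (by rw [hv]; exact hw1)
    convert (core w hw0 hwV hw1).mul h2 using 1
    field_simp
    ring

theorem smallval_iff {z : K} (hz0 : z ≠ 0) (hz : ¬ mm (Vg ℓ O) z) :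
    O.valuation z < 1 ↔ mm (U1v ℓ O) (1 - z) := by
  refine ⟨mmU, fun h => ?_⟩
  rcases v_trich hz0 (fun h => hz (mmV_one h)) with h1 | h1
  · exact h1
  exfalso
  apply hz
  have h2 := mmU (ℓ := ℓ) h1
  have := ((h.div h2).neg hnU).mono U1_le_V
  convert this using 1
  have h3 := h2.ne
  have h4 : z - 1 ≠ 0 := by
    intro h'
    exact h.ne (by linear_combination -h')
  field_simp
  ring

theorem inj_le (hℓ : ℓ.Prime) {O₁ O₂ : ValuationSubring K} (h1 : O₁ ∈ VK K ℓ) (h2 : O₂ ∈ VK K ℓ)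
    (h : U1v ℓ O₁ = U1v ℓ O₂) : O₁ ≤ O₂ := by
  have hV : Vg ℓ O₁ = Vg ℓ O₂ := by rw [← VK_eq hℓ h1, ← VK_eq hℓ h2, h]
  have key : ∀ z : K, z ≠ 0 → ¬ mm (Vg ℓ O₁) z → (O₁.valuation z < 1 ↔ O₂.valuation z < 1) := by
    intro z hz0 hz
    rw [smallval_iff hz0 hz, smallval_iff hz0 (hV ▸ hz), h]
  intro x hx
  by_cases hx0 : x = 0
  · rw [hx0]; exact O₂.zero_mem
  have hx1 := (O₁.valuation_le_one_iff x).mpr hx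
  rw [← O₂.valuation_le_one_iff]
  by_cases hxV : mm (Vg ℓ O₁) x
  · by_contra! hc
    obtain ⟨y, hyV, hy1, hy2⟩ := dense hℓ h2.1 (x := Units.mk0 x hx0) hc
      (by rw [← hV]; exact mm_coe.mp hxV)
    rw [Units.val_mk0] at hy2
    have hyV' : ¬ mm (Vg ℓ O₁) (y : K)⁻¹ := by
      intro h'
      apply hyV
      rw [← hV]
      have := h'.inv
      rw [inv_inv] at this
      exact mm_coe.mp this
    have hyi : (y : K)⁻¹ ≠ 0 := inv_ne_zero y.ne_zero
    have h3 : O₁.valuation (y : K)⁻¹ < 1 := by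
      rw [key _ hyi hyV', map_inv₀]; exact inv_lt_one_of_one_lt₀ hy1
    have hxy : ¬ mm (Vg ℓ O₁) (x * (y : K)⁻¹) := by
      intro h'
      apply hyV'
      have := h'.div hxV
      rwa [mul_div_cancel_left₀ _ hx0] at this
    have h4 : O₁.valuation (x * (y : K)⁻¹) < 1 := by
      rw [map_mul]
      exact (mul_le_of_le_one_left' hx1).trans_lt h3
    rw [key _ (mul_ne_zero hx0 hyi) hxy, map_mul, map_inv₀, ← div_eq_mul_inv,
      div_lt_one₀ (zero_lt_one.trans hy1)] at h4
    exact absurd hy2 (not_lt.mpr h4.le)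
  · have : O₁.valuation x < 1 := lt_of_le_of_ne hx1 (fun h' => hxV (mmV_one h'))
    exact ((key x hx0 hxV).mp this).le

theorem surj (hℓ : ℓ.Prime) {T : Subgroup Kˣ} (hT : T ∈ TK K ℓ) :
    ∃ O ∈ VK K ℓ, U1v ℓ O = T := by
  obtain ⟨hp, hn, hne, hmin⟩ := hT
  have R : Rig ℓ T (Hbold T) :=
    { pr := hℓ, hp := hp, hn := hn, le := le_Hbold, ind := fun x hx => Hbold_ind hℓ hp hx
      ex := by
        by_contra! hc
        exact hne (le_antisymm le_Hbold (Hbold_le hℓ hp le_rfl (fun x hx => absurd hx (hc x)))) }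
  have hU : U1v ℓ R.ring ≤ T := U1_le hp hn (fun x hx => R.max_T hx)
  have hVH : Vg ℓ R.ring ≤ Hbold T := by
    refine sup_le (fun u hu => R.unit_H hu) ?_
    rintro _ ⟨x, rfl⟩
    exact le_Hbold (hp x)
  have hUT : U1v ℓ R.ring = T := by
    by_contra h
    exact hmin _ hpU hnU hU h ((HU_le hℓ).trans hVH)
  have htop : Hbold (smallSub (IsLocalRing.ResidueField R.ring) ℓ) = ⊤ := by
    apply small_top hℓ
    rw [hUT]
    exact fun u hu => R.unit_H hu
  refine ⟨R.ring, ⟨?_, ?_, htop⟩, hUT⟩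
  · intro D hD1 hD2 hD3
    have hDV : D ≤ Hbold T := by
      intro d hd
      apply hVH
      obtain ⟨z, _, hz⟩ := hD3 d hd
      have : d = (z ^ ℓ / d)⁻¹ * z ^ ℓ := by simp
      rw [this]
      exact Subgroup.mul_mem_sup (inv_mem hz) ⟨z, rfl⟩
    have main : ∀ d ∈ D, ¬ 1 < R.ring.valuation (d : K) := by
      intro d hd hlt
      obtain ⟨s, hs0, hsH, hs1, hs2⟩ := R.wit (mm_coe.mpr (hDV hd)) hlt
      have hvs : 0 < R.ring.valuation s := by simpa [zero_lt_iff] using hs0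
      have h3 := hD2 d hd (Units.mk0 s hs0)⁻¹
        (by rw [Units.val_inv_eq_inv_val, Units.val_mk0, map_inv₀]; exact (one_le_inv₀ hvs).mpr hs1)
        (by
          rw [Units.val_inv_eq_inv_val, Units.val_mk0, map_inv₀]
          rw [map_mul] at hs2
          exact (inv_le_iff_one_le_mul₀ hvs).mpr hs2)
      rw [inv_mem_iff] at h3
      exact hsH ⟨_, hDV h3, rfl⟩
    refine le_antisymm (fun d hd => ?_) hD1
    rw [R.ring.mem_unitGroup_iff]
    have h1 := main d hd
    have h2 := main d⁻¹ (inv_mem hd)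
    rw [Units.val_inv_eq_inv_val, map_inv₀, one_lt_inv₀ (by simp [zero_lt_iff])] at h2
    exact le_antisymm (not_lt.mp h1) (not_lt.mp h2)
  · intro hc
    have h1 : Hbold (smallSub (IsLocalRing.ResidueField R.ring) ℓ) ≤ smallSub _ ℓ :=
      Hbold_le hℓ hp_small le_rfl (fun x hx => absurd hx (not_ind_of_cyclic hℓ hp_small hc _ _))
    rw [htop] at h1
    apply hne
    refine le_antisymm le_Hbold ?_
    have h2 : Hbold T ≤ Vg ℓ R.ring := by
      have := HU_le (ℓ := ℓ) (O := R.ring) hℓ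
      rwa [hUT] at this
    refine h2.trans (sup_le ?_ ?_)
    · intro u hu
      rw [← hUT]
      exact (unit_iff hℓ ⟨u, hu⟩).mpr (h1 trivial)
    · rintro _ ⟨x, rfl⟩
      exact hp x

end val

/-- `v ↦ 𝔘_v^1` is a bijection from `𝒱_K` onto `𝒯_K` (in particular
`𝔘_v^1 ∈ 𝒯_K` for every `v ∈ 𝒱_K`). -/
theorem stmt_11 {K : Type*} [Field K] (ℓ : ℕ) (hℓ : ℓ.Prime) :
    Set.BijOn (fun O : ValuationSubring K => U1v ℓ O) (VK K ℓ) (TK K ℓ) := by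
  refine ⟨fun O hO => mapsTo hℓ hO, fun O₁ h1 O₂ h2 h => ?_, fun T hT => ?_⟩
  · exact le_antisymm (inj_le hℓ h1 h2 h) (inj_le hℓ h2 h1 h.symm)
  · obtain ⟨O, hO, h⟩ := surj hℓ hT
    exact ⟨O, hO, h⟩
end
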